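/- arXiv:0803.1109 — 5 statements merged into one kernel-verified Lean document; each statement's English description precedes it below -/
import Mathlib

section
/- The set of integers n ≥ 2 for which σ(n)/n > (2597/1000) · log(log(3·τ(n))) has exactly 12 elements. -/
/-!
Write `T = log τ(n)`; the inequality to be refuted reads `σ(n)/n > 2.597 log (T + log 3)`.

*Small `T`.* For natural numbers `u`, `v` the quantity `(σ(n)/n)^v / τ(n)^u` is multiplicative, so it
is maximised one prime at a time, by a number whose exponents are found and certified by finitely
many comparisons of natural numbers (`cellCheck`). This bounds `log (σ(n)/n)` by a linear function
of `T`, and as `exp` of a linear function minus `2.597 log (T + log 3)` is convex, the bound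
refutes the inequality on a whole interval of `T` as soon as it does so at both ends (`window`,
`cell_window`). Eleven slopes `u / v` settle `0.69 ≤ T ≤ 194.074` except for
`24.918 ≤ T ≤ 29.321`, where the maximiser is itself among the exceptions. There, a number violating
the inequality has to come within a fixed factor `0.8685` of the maximum. The losses of the
individual primes multiply, so only finitely many exponent vectors qualify; they are enumerated by
a depth-first search (`search_sound`), and exactly the twelve numbers of `exc` survive.

*Medium `T`.* The number of prime factors of `n` is at most `T / log 2`. Comparing the prime factors
with the primes below `K = 2 ^ k` bounds `log (σ(n)/n)` by the Euler product over those primes plus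
a term linear in `T` (`log_sigma_le`). With `k = 11, 13, 15, 17` and the Euler products evaluated
exactly, convexity again covers `194.074 ≤ T ≤ 28000`.

*Large `T`.* The same comparison is used with `K ≈ (T / log 2) log K`. The Euler product is bounded
by `1.96 log K` (`eulerLog_le`), through Mertens' identity `log n! = ∑ Λ(d) ⌊n / d⌋` and partial
summation starting from `2 ^ 17`, and the number of primes below `K` is bounded from below by
Chebyshev's estimate. Since `1.96 < 2.597`, there is enough room from `T = 28000` on (`tail_bound`).
-/

open Real

/-- The sum of the divisors of `n`. -/
def sigmaFn (n : ℕ) : ℕ := ∑ d ∈ n.divisors, d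

/-- The number of divisors of `n`. -/
def tauFn (n : ℕ) : ℕ := n.divisors.card

/-! ### Rational bounds for logarithms -/

/-- `x + x³/3 + ⋯ + x²¹/21`, a partial sum of `½ log ((1 + x) / (1 - x))`, in Horner form. -/
def artanhSum (x : ℚ) : ℚ :=
  let y := x * x
  x * (1 + y * (1/3 + y * (1/5 + y * (1/7 + y * (1/9 + y * (1/11 + y * (1/13 + y * (1/15 +
    y * (1/17 + y * (1/19 + y * (1/21)))))))))))

/-- A rational lower bound for `log q`, valid for `q ≥ 1/4`: `4 * q` is written as `2 ^ m * r` with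
`1 ≤ r`, the bound for `log r` is the artanh series, and the result is rounded down to a multiple
of `10 ^ (-15)`. -/
def logLo (q : ℚ) : ℚ :=
  let m := Nat.log2 ⌊4 * q⌋.toNat
  let r := 4 * q / (2 : ℚ) ^ m
  let s := m * (6931471803 / 10000000000) - 2 * (6931471808 / 10000000000)
    + 2 * artanhSum ((r - 1) / (r + 1))
  (⌊s * 1000000000000000⌋ : ℚ) / 1000000000000000

/-- A rational upper bound for `log q`, valid for `q ≥ 1`. -/
def logHi (q : ℚ) : ℚ :=
  let m := Nat.log2 ⌊q⌋.toNat + 1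
  m * (6931471808 / 10000000000) - logLo ((2 : ℚ) ^ m / q)

lemma artanhSum_le {x : ℚ} (h0 : 0 ≤ x) (h1 : x < 1) :
    ((artanhSum x : ℚ) : ℝ) ≤ 1 / 2 * log ((1 + x) / (1 - x)) := by
  have h := Real.sum_range_le_log_div (x := (x : ℝ)) (by exact_mod_cast h0) (by exact_mod_cast h1) 11
  refine le_trans (le_of_eq ?_) h
  simp only [Finset.sum_range_succ, Finset.sum_range_zero, artanhSum]
  push_cast
  ring

lemma logLo_le {q : ℚ} (hq : 1 / 4 ≤ q) : ((logLo q : ℚ) : ℝ) ≤ log q := by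
  unfold logLo
  set m := Nat.log2 ⌊4 * q⌋.toNat with hm
  set r := 4 * q / (2 : ℚ) ^ m with hr
  have hf : 1 ≤ ⌊4 * q⌋ := by
    rw [Int.le_floor]; push_cast; linarith
  have hm2 : (2 : ℚ) ^ m ≤ 4 * q := by
    have h1 : 2 ^ m ≤ ⌊4 * q⌋.toNat := Nat.log2_self_le (by omega)
    have h2 : ((2 ^ m : ℕ) : ℤ) ≤ ⌊4 * q⌋ := by
      have := Int.toNat_of_nonneg (show 0 ≤ ⌊4 * q⌋ by omega)
      omega
    have h3 := Int.le_floor.mp h2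
    exact_mod_cast h3
  have hp : (0 : ℚ) < 2 ^ m := by positivity
  have hr1 : 1 ≤ r := by rw [hr, le_div_iff₀ hp]; linarith
  have h0 : 0 ≤ (r - 1) / (r + 1) := div_nonneg (by linarith) (by linarith)
  have h1 : (r - 1) / (r + 1) < 1 := by rw [div_lt_one (by linarith)]; linarith
  have ha := artanhSum_le h0 h1
  have hrR : (1 : ℝ) ≤ r := by exact_mod_cast hr1
  have e1 : (1 + (((r - 1) / (r + 1) : ℚ) : ℝ)) / (1 - (((r - 1) / (r + 1) : ℚ) : ℝ)) = r := by
    push_cast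
    have : (r : ℝ) + 1 ≠ 0 := by linarith
    field_simp
    ring
  rw [e1] at ha
  have e2 : log q = m * log 2 - 2 * log 2 + log r := by
    have hq' : (q : ℝ) = 2 ^ m * r / 2 ^ 2 := by
      rw [hr]; push_cast; field_simp; norm_num
    rw [hq', log_div (by positivity) (by positivity), log_mul (by positivity) (by positivity),
      log_pow, log_pow]
    push_cast; ring
  have hl1 := Real.log_two_gt_d9
  have hl2 := Real.log_two_lt_d9
  have hm0 : (0 : ℝ) ≤ m := by positivity
  set s : ℚ := m * (6931471803 / 10000000000) - 2 * (6931471808 / 10000000000)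
    + 2 * artanhSum ((r - 1) / (r + 1)) with hs
  have hs1 : (⌊s * 1000000000000000⌋ : ℚ) / 1000000000000000 ≤ s := by
    rw [div_le_iff₀ (by norm_num)]; exact Int.floor_le _
  have hs2 : (s : ℝ) ≤ log q := by
    rw [e2, hs]; push_cast
    nlinarith
  have hs1' : (((⌊s * 1000000000000000⌋ : ℚ) / 1000000000000000 : ℚ) : ℝ) ≤ (s : ℝ) :=
    Rat.cast_le.mpr hs1
  exact hs1'.trans hs2

lemma le_logHi {q : ℚ} (hq : 1 ≤ q) : log q ≤ ((logHi q : ℚ) : ℝ) := by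
  unfold logHi
  set m := Nat.log2 ⌊q⌋.toNat + 1 with hm
  have hf : 1 ≤ ⌊q⌋ := by
    rw [Int.le_floor]; push_cast; linarith
  have hm2 : q ≤ (2 : ℚ) ^ m := by
    have h1 : ⌊q⌋.toNat < 2 ^ m := Nat.lt_log2_self
    have h2 : ⌊q⌋ < ((2 ^ m : ℕ) : ℤ) := by
      have := Int.toNat_of_nonneg (show 0 ≤ ⌊q⌋ by omega)
      omega
    have h3 := Int.floor_lt.mp h2
    exact_mod_cast h3.le
  have h := logLo_le (q := (2 : ℚ) ^ m / q) (by rw [le_div_iff₀ (by linarith)]; linarith)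
  have hqR : (1 : ℝ) ≤ q := by exact_mod_cast hq
  push_cast at h
  rw [log_div (by positivity) (by positivity), log_pow] at h
  have hl2 := Real.log_two_lt_d9
  have hm0 : (0 : ℝ) ≤ m := by positivity
  push_cast
  have : (m : ℝ) * log 2 ≤ m * (6931471808 / 10000000000) := by
    apply mul_le_mul_of_nonneg_left _ hm0; linarith
  linarith

/-! ### Multiplicative formulas -/

/-- `1 + p + ⋯ + p ^ a`, by Horner's rule so that the kernel evaluates it quickly. -/
def sg (p a : ℕ) : ℕ := Nat.rec 1 (fun _ s => p * s + 1) a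

lemma sg_zero (p : ℕ) : sg p 0 = 1 := rfl

lemma sg_succ (p a : ℕ) : sg p (a + 1) = p * sg p a + 1 := rfl

lemma sg_eq (p a : ℕ) : sg p a = ∑ i ∈ Finset.range (a + 1), p ^ i := by
  induction a with
  | zero => simp [sg_zero]
  | succ a ih =>
    rw [sg_succ, ih, Finset.sum_range_succ' _ (a + 1), Finset.mul_sum]
    simp [pow_succ, mul_comm]

lemma sg_pos (p a : ℕ) : 0 < sg p a := by
  cases a with
  | zero => simp [sg_zero]
  | succ a => rw [sg_succ]; omega

lemma sg_lt {p : ℕ} (hp : 2 ≤ p) (a : ℕ) : sg p a * (p - 1) < p * p ^ a := by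
  obtain ⟨k, rfl⟩ : ∃ k, p = k + 1 := ⟨p - 1, by omega⟩
  induction a with
  | zero => simp [sg_zero]
  | succ a ih =>
    rw [sg_succ]
    have : k + 1 - 1 = k := rfl
    rw [this] at ih ⊢
    rw [pow_succ]
    nlinarith

/-- The factor `σ(p ^ a) / p ^ a` of the abundancy index. -/
noncomputable def ab (p a : ℕ) : ℝ := (sg p a : ℝ) / (p : ℝ) ^ a

lemma ab_zero (p : ℕ) : ab p 0 = 1 := by simp [ab, sg_zero]

lemma ab_pos {p : ℕ} (hp : 2 ≤ p) (a : ℕ) : 0 < ab p a := by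
  have := sg_pos p a
  unfold ab; positivity

lemma ab_le {p : ℕ} (hp : 2 ≤ p) (a : ℕ) : ab p a ≤ (p : ℝ) / (p - 1) := by
  have h := sg_lt hp a
  have hp' : (2 : ℝ) ≤ p := by exact_mod_cast hp
  unfold ab
  rw [div_le_div_iff₀ (by positivity) (by linarith)]
  have h2 : ((sg p a * (p - 1) : ℕ) : ℝ) < ((p * p ^ a : ℕ) : ℝ) := by exact_mod_cast h
  push_cast [Nat.cast_sub (show 1 ≤ p by omega)] at h2
  exact h2.le

lemma sigmaFn_eq {n : ℕ} (hn : n ≠ 0) :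
    (sigmaFn n : ℝ) / n = ∏ p ∈ n.primeFactors, ab p (n.factorization p) := by
  have h1 : sigmaFn n = ∏ p ∈ n.primeFactors, sg p (n.factorization p) := by
    unfold sigmaFn
    rw [Nat.sum_divisors hn]
    exact Finset.prod_congr rfl fun p _ => (sg_eq _ _).symm
  have h2 : (n : ℝ) = ∏ p ∈ n.primeFactors, (p : ℝ) ^ (n.factorization p) := by
    conv_lhs => rw [← Nat.prod_factorization_pow_eq_self hn]
    rw [Finsupp.prod, Nat.support_factorization]
    push_cast; rfl
  unfold ab
  rw [h1, Finset.prod_div_distrib, ← h2]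
  push_cast; rfl

lemma tauFn_eq {n : ℕ} (hn : n ≠ 0) :
    tauFn n = ∏ p ∈ n.primeFactors, (n.factorization p + 1) := by
  unfold tauFn
  rw [Nat.card_divisors hn]

lemma log_sigma {n : ℕ} (hn : n ≠ 0) :
    log ((sigmaFn n : ℝ) / n) = ∑ p ∈ n.primeFactors, log (ab p (n.factorization p)) := by
  rw [sigmaFn_eq hn, log_prod]
  intro p hp
  exact (ab_pos (Nat.prime_of_mem_primeFactors hp).two_le _).ne'

lemma log_tau {n : ℕ} (hn : n ≠ 0) :
    log (tauFn n) = ∑ p ∈ n.primeFactors, log ((n.factorization p : ℝ) + 1) := by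
  rw [tauFn_eq hn]
  push_cast
  rw [log_prod]
  intro p hp
  positivity

/-! ### Linear bounds on a window -/

/-- `exp (α + μ T) - 2.597 log (T + log 3)` is convex in `T`, so it is nonpositive on an interval as
soon as it is so at the endpoints. -/
lemma window {α μ T₁ T₂ T : ℝ} (h0 : 0 ≤ T₁) (hT₁ : T₁ ≤ T) (hT₂ : T ≤ T₂)
    (h₁ : exp (α + μ * T₁) ≤ 2597 / 1000 * log (T₁ + log 3))
    (h₂ : exp (α + μ * T₂) ≤ 2597 / 1000 * log (T₂ + log 3)) :
    exp (α + μ * T) ≤ 2597 / 1000 * log (T + log 3) := by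
  have hl3 : 0 < log 3 := log_pos (by norm_num)
  have hc1 : ConvexOn ℝ (Set.Icc T₁ T₂) fun t => exp (α + μ * t) := by
    have := convexOn_exp.comp_affineMap (AffineMap.lineMap α (α + μ) : ℝ →ᵃ[ℝ] ℝ)
    refine (this.subset (Set.subset_univ _) (convex_Icc _ _)).congr ?_
    intro t _
    simp [AffineMap.lineMap_apply]
    ring
  have hc2 : ConcaveOn ℝ (Set.Icc T₁ T₂) fun t => log (t + log 3) := by
    have := strictConcaveOn_log_Ioi.concaveOn.translate_left (log 3)
    refine this.subset ?_ (convex_Icc _ _) |>.congr ?_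
    · intro t ht
      simp only [Set.mem_preimage, Set.mem_Ioi]
      linarith [ht.1]
    · intro t _
      simp
  have hc : ConvexOn ℝ (Set.Icc T₁ T₂)
      ((fun t => exp (α + μ * t)) - fun t => (2597 / 1000 : ℝ) * log (t + log 3)) :=
    hc1.sub (hc2.smul (by norm_num))
  have := hc.le_max_of_mem_Icc (Set.left_mem_Icc.2 (hT₁.trans hT₂))
    (Set.right_mem_Icc.2 (hT₁.trans hT₂)) ⟨hT₁, hT₂⟩
  simp only [Pi.sub_apply] at this
  have h3 := this.trans (max_le (sub_nonpos.2 h₁) (sub_nonpos.2 h₂))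
  linarith

lemma log_three_gt : (10986122 / 10000000 : ℝ) ≤ log 3 := by
  have h := logLo_le (q := 3) (by norm_num)
  have h2 : (10986122 / 10000000 : ℚ) ≤ logLo 3 := by decide +kernel
  have h3 : (((10986122 / 10000000 : ℚ)) : ℝ) ≤ logLo 3 := Rat.cast_le.mpr h2
  push_cast at h h3
  linarith

/-- A rational lower bound for `2.597 log (T + log 3)`. -/
def rhsLo (T : ℚ) : ℚ := 2597 / 1000 * logLo (T + 10986122 / 10000000)

lemma rhsLo_le {T : ℚ} (hT : 0 ≤ T) : (rhsLo T : ℝ) ≤ 2597 / 1000 * log (T + log 3) := by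
  have h := logLo_le (q := T + 10986122 / 10000000) (by linarith)
  have hT' : (0 : ℝ) ≤ T := by exact_mod_cast hT
  have h2 : log ((T + 10986122 / 10000000 : ℚ) : ℝ) ≤ log (T + log 3) := by
    apply log_le_log
    · push_cast; positivity
    · push_cast; linarith [log_three_gt]
  unfold rhsLo
  push_cast at h h2 ⊢
  linarith

/-- The numerical hypothesis of `window` at an endpoint `T`: the logarithm of the right-hand side
is compared with `δ + log A`. -/
lemma endpoint {B : ℝ} {T A δ : ℚ} (hT : 0 ≤ T) (hA : 0 < A) (hB : B ≤ δ + log A)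
    (h2 : 1 / 4 ≤ rhsLo T / A) (h3 : δ ≤ logLo (rhsLo T / A)) :
    exp B ≤ 2597 / 1000 * log (T + log 3) := by
  refine le_trans ?_ (rhsLo_le hT)
  have hpos : 0 < rhsLo T := by
    by_contra hneg
    have : rhsLo T / A ≤ 0 := div_nonpos_of_nonpos_of_nonneg (not_lt.1 hneg) hA.le
    linarith
  have hposR : (0 : ℝ) < rhsLo T := by exact_mod_cast hpos
  have hAR : (0 : ℝ) < A := by exact_mod_cast hA
  have h := logLo_le h2
  have h3' : (δ : ℝ) ≤ logLo (rhsLo T / A) := Rat.cast_le.mpr h3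
  rw [Rat.cast_div, log_div hposR.ne' hAR.ne'] at h
  rw [← le_log_iff_exp_le hposR]
  linarith

/-! ### Maximising `σ(n) / n` against a power of `τ(n)` -/

/-- The contribution of a prime power `p ^ a ∥ n` to `v log (σ(n) / n) - u log τ(n)`. -/
noncomputable def gain (u v p a : ℕ) : ℝ := v * log (ab p a) - u * log ((a : ℝ) + 1)

lemma gain_zero (u v p : ℕ) : gain u v p 0 = 0 := by simp [gain, ab_zero]

lemma log_combine {A₁ A₂ B₁ B₂ θ : ℝ} {u v : ℕ} (hA₁ : 0 < A₁) (hA₂ : 0 < A₂) (hB₁ : 0 < B₁)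
    (hB₂ : 0 < B₂) (hθ : 0 < θ) (h : A₁ ^ v * B₂ ^ u ≤ θ * (A₂ ^ v * B₁ ^ u)) :
    v * log A₁ - u * log B₁ ≤ v * log A₂ - u * log B₂ + log θ := by
  have := log_le_log (by positivity) h
  rw [log_mul (by positivity) (by positivity), log_mul (by positivity) (by positivity),
    log_mul (by positivity) (by positivity), log_pow, log_pow, log_pow, log_pow] at this
  linarith

/-- The certificate that `N = ∏ p ^ e`, over the pairs `(p, e)` of `L`, maximises
`(σ(n) / n) ^ v / τ(n) ^ u`, and that a number having a prime factor outside `L`, or an exponent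
exceeding `e + J`, loses at least a factor `N / S` against the maximum. -/
def cellCheck (u v q J N S : ℕ) (L : List (ℕ × ℕ)) : Bool :=
  (L.map Prod.fst).Nodup && L.all (fun x => Nat.ble 2 x.1) &&
  (List.range q).all (fun m => Nat.ble m 1 || (L.map Prod.fst).contains m ||
    L.any fun x => Nat.ble (x.1 + 1) m && Nat.beq (m % x.1) 0) &&
  L.all (fun x =>
    (List.range (x.2 + J + 1)).all (fun a =>
      Nat.ble (Nat.mul (Nat.pow (sg x.1 a * Nat.pow x.1 x.2) v) (Nat.pow (x.2 + 1) u))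
        (Nat.mul (Nat.pow (sg x.1 x.2 * Nat.pow x.1 a) v) (Nat.pow (a + 1) u))) &&
    Nat.ble (S * (Nat.pow (x.1 * Nat.pow x.1 x.2) v * Nat.pow (x.2 + 1) u))
      (N * (Nat.pow (sg x.1 x.2 * (x.1 - 1)) v * Nat.pow (x.2 + J + 2) u))) &&
  Nat.ble 2 q && Nat.ble (S * Nat.pow (q + 1) v) (N * (Nat.pow 2 u * Nat.pow q v)) &&
  Nat.ble (S * Nat.pow q v) (N * (Nat.pow 3 u * Nat.pow (q - 1) v)) &&
  Nat.ble 1 N && Nat.ble N S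

section cell

variable {u v q J N S : ℕ} {L : List (ℕ × ℕ)}

lemma gain_le_of_le {p e a : ℕ} (hp : 2 ≤ p)
    (h : (sg p a * p ^ e) ^ v * (e + 1) ^ u ≤ (sg p e * p ^ a) ^ v * (a + 1) ^ u) :
    gain u v p a ≤ gain u v p e := by
  have hp0 : (0 : ℝ) < p := by positivity
  have h' : ((sg p a : ℝ) * p ^ e) ^ v * (e + 1) ^ u ≤ (sg p e * p ^ a) ^ v * (a + 1) ^ u := by
    exact_mod_cast h
  have := log_combine (A₁ := ab p a) (A₂ := ab p e) (B₁ := a + 1) (B₂ := e + 1) (θ := 1)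
    (u := u) (v := v) (ab_pos hp a) (ab_pos hp e) (by positivity) (by positivity) one_pos ?_
  · simpa [gain] using this
  · unfold ab
    rw [div_pow, div_pow, one_mul, div_mul_eq_mul_div, div_mul_eq_mul_div,
      div_le_div_iff₀ (by positivity) (by positivity)]
    rw [mul_pow, mul_pow] at h'
    linarith

lemma gain_tail {p e a : ℕ} (hp : 2 ≤ p) (hN : 0 < N) (hS : 0 < S) (ha : e + J < a)
    (h : S * ((p * p ^ e) ^ v * (e + 1) ^ u) ≤
      N * ((sg p e * (p - 1)) ^ v * (e + J + 2) ^ u)) :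
    gain u v p a ≤ gain u v p e + log (N / S) := by
  have hp0 : (0 : ℝ) < p := by positivity
  have hp1 : (0 : ℝ) < p - 1 := by
    have : (2 : ℝ) ≤ p := by exact_mod_cast hp
    linarith
  have hS' : (0 : ℝ) < S := by positivity
  have h' : (S : ℝ) * ((p * p ^ e) ^ v * (e + 1) ^ u) ≤
      N * ((sg p e * (p - 1)) ^ v * (e + J + 2) ^ u) := by
    have : ((p - 1 : ℕ) : ℝ) = p - 1 := by push_cast [Nat.cast_sub (show 1 ≤ p by omega)]; ring
    rw [← this]
    exact_mod_cast h
  have haR : (e + J + 2 : ℝ) ≤ a + 1 := by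
    have : e + J + 2 ≤ a + 1 := by omega
    exact_mod_cast this
  refine log_combine (ab_pos hp a) (ab_pos hp e) (by positivity) (by positivity) (by positivity) ?_
  calc ab p a ^ v * ((e : ℝ) + 1) ^ u ≤ ((p : ℝ) / (p - 1)) ^ v * ((e : ℝ) + 1) ^ u := by
        have := ab_le hp a
        have := (ab_pos hp a).le
        gcongr
    _ ≤ N / S * (ab p e ^ v * ((e : ℝ) + J + 2) ^ u) := by
        unfold ab
        rw [div_pow, div_pow, div_mul_eq_mul_div, div_mul_eq_mul_div _ _ (((e : ℝ) + J + 2) ^ u),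
          div_mul_div_comm, div_le_div_iff₀ (by positivity) (by positivity)]
        rw [mul_pow, mul_pow] at h'
        linarith
    _ ≤ N / S * (ab p e ^ v * ((a : ℝ) + 1) ^ u) := by
        have := (ab_pos hp e).le
        gcongr

lemma gain_large {p a : ℕ} (hq : 2 ≤ q) (hp : q ≤ p) (hN : 0 < N) (hS : 0 < S) (ha : 0 < a)
    (h₁ : S * (q + 1) ^ v ≤ N * (2 ^ u * q ^ v))
    (h₂ : S * q ^ v ≤ N * (3 ^ u * (q - 1) ^ v)) :
    gain u v p a ≤ log (N / S) := by
  have hS' : (0 : ℝ) < S := by positivity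
  have hqR : (2 : ℝ) ≤ q := by exact_mod_cast hq
  have hpR : (q : ℝ) ≤ p := by exact_mod_cast hp
  have key : ab p a ^ v * 1 ^ u ≤ N / S * ((1 : ℝ) ^ v * ((a : ℝ) + 1) ^ u) := by
    rw [one_pow, one_pow, mul_one, one_mul]
    have hb := (ab_pos (hq.trans hp) a).le
    rcases Nat.lt_or_ge 1 a with h1 | h1
    · have h2' : (S : ℝ) * q ^ v ≤ N * (3 ^ u * (q - 1) ^ v) := by
        have : ((q - 1 : ℕ) : ℝ) = q - 1 := by push_cast [Nat.cast_sub (show 1 ≤ q by omega)]; ring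
        rw [← this]; exact_mod_cast h₂
      have h3 : ab p a ≤ (q : ℝ) / (q - 1) := (ab_le (hq.trans hp) a).trans <| by
        rw [div_le_div_iff₀ (by linarith) (by linarith)]
        nlinarith
      have hq1 : (0 : ℝ) < q - 1 := by linarith
      calc ab p a ^ v ≤ ((q : ℝ) / (q - 1)) ^ v := by gcongr
        _ ≤ N / S * 3 ^ u := by
          rw [div_pow, div_mul_eq_mul_div, div_le_div_iff₀ (by positivity) hS']
          linarith
        _ ≤ _ := by
          have : (2 : ℝ) ≤ a := by exact_mod_cast h1
          gcongr
          linarith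
    · obtain rfl : a = 1 := by omega
      have h1' : (S : ℝ) * (q + 1) ^ v ≤ N * (2 ^ u * q ^ v) := by exact_mod_cast h₁
      have h3 : ab p 1 ≤ ((q : ℝ) + 1) / q := by
        have : ab p 1 = ((p : ℝ) + 1) / p := by simp [ab, sg_succ, sg_zero]
        rw [this, div_le_div_iff₀ (by linarith) (by linarith)]
        linarith
      have hq1 : (0 : ℝ) < q := by linarith
      calc ab p 1 ^ v ≤ (((q : ℝ) + 1) / q) ^ v := by gcongr
        _ ≤ N / S * 2 ^ u := by
          rw [div_pow, div_mul_eq_mul_div, div_le_div_iff₀ (by positivity) hS']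
          linarith
        _ = _ := by norm_num
  have := log_combine (ab_pos (hq.trans hp) a) one_pos (by positivity) one_pos (by positivity) key
  simpa [gain] using this

/-- The three facts about gains certified by `cellCheck`. -/
lemma cellCheck_spec (h : cellCheck u v q J N S L = true) :
    (L.map Prod.fst).Nodup ∧ 0 < N ∧ N ≤ S ∧ (∀ x ∈ L, 2 ≤ x.1) ∧
    (∀ x ∈ L, ∀ a, a ≤ x.2 + J → gain u v x.1 a ≤ gain u v x.1 x.2) ∧
    (∀ x ∈ L, ∀ a, x.2 + J < a → gain u v x.1 a ≤ gain u v x.1 x.2 + log (N / S)) ∧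
    (∀ p a, p.Prime → p ∉ L.map Prod.fst → 0 < a → gain u v p a ≤ log (N / S)) := by
  simp only [cellCheck, Bool.and_eq_true, decide_eq_true_eq, List.all_eq_true, Nat.ble_eq,
    List.mem_range, Bool.or_eq_true, List.any_eq_true, Nat.beq_eq, Nat.pow_eq, Nat.mul_eq] at h
  obtain ⟨⟨⟨⟨⟨⟨⟨⟨hnd, h2⟩, hpr⟩, hL⟩, hq⟩, hl1⟩, hl2⟩, hN⟩, hNS⟩ := h
  refine ⟨hnd, hN, hNS, h2, fun x hx a ha => ?_, fun x hx a ha => ?_, fun p a hp hpL ha => ?_⟩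
  · exact gain_le_of_le (h2 x hx) ((hL x hx).1 a (by omega))
  · exact gain_tail (h2 x hx) hN (by omega) ha (hL x hx).2
  · refine gain_large hq ?_ hN (by omega) ha hl1 hl2
    by_contra hlt
    rcases hpr p (by omega) with (h | h) | ⟨x, hx, h⟩
    · have := hp.two_le; omega
    · exact hpL (by simpa using h)
    · have hd : x.1 ∣ p := Nat.dvd_of_mod_eq_zero h.2
      rcases (Nat.dvd_prime hp).1 hd with h' | h'
      · have := h2 x hx; omega
      · have := h.1; omega

lemma sum_map_sub' {α : Type*} (f g : α → ℝ) (l : List α) :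
    (l.map fun x => f x - g x).sum = (l.map f).sum - (l.map g).sum := by
  induction l with
  | nil => simp
  | cons x l ih => simp [ih]; ring

/-- The exact comparison of `n` with the maximiser: either `n` loses a factor `N / S`, or its
exponents lie in the finite search box and its total loss is less than that factor. -/
lemma cell_dichotomy (h : cellCheck u v q J N S L = true) {n : ℕ} (hn : n ≠ 0) :
    v * log ((sigmaFn n : ℝ) / n) - u * log (tauFn n) ≤
      (L.map fun x => gain u v x.1 x.2).sum + log (N / S) ∨
    ((∀ p ∈ n.primeFactors, p ∈ L.map Prod.fst) ∧ (∀ x ∈ L, n.factorization x.1 ≤ x.2 + J) ∧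
      log (N / S) <
        (L.map fun x => gain u v x.1 (n.factorization x.1) - gain u v x.1 x.2).sum) := by
  obtain ⟨hnd, hN, hNS, h2, h3, h4, h5⟩ := cellCheck_spec h
  set f := n.factorization with hf
  set θ := log ((N : ℝ) / S) with hθ
  have hθ0 : θ ≤ 0 := by
    apply log_nonpos (by positivity)
    rw [div_le_one (by exact_mod_cast hN.trans_le hNS)]
    exact_mod_cast hNS
  have hle : ∀ x ∈ L, gain u v x.1 (f x.1) ≤ gain u v x.1 x.2 := by
    intro x hx
    rcases le_or_gt (f x.1) (x.2 + J) with h' | h'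
    · exact h3 x hx _ h'
    · linarith [h4 x hx _ h']
  set Ls := (L.map Prod.fst).toFinset with hLs
  have hsum : v * log ((sigmaFn n : ℝ) / n) - u * log (tauFn n) =
      (∑ p ∈ n.primeFactors \ Ls, gain u v p (f p)) +
        (L.map fun x => gain u v x.1 (f x.1)).sum := by
    have e1 : (L.map fun x => gain u v x.1 (f x.1)).sum = ∑ p ∈ Ls, gain u v p (f p) := by
      rw [hLs, List.sum_toFinset _ hnd, List.map_map]
      rfl
    rw [e1, ← Finset.sum_union Finset.sdiff_disjoint, Finset.sdiff_union_self_eq_union,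
      log_sigma hn, log_tau hn, Finset.mul_sum, Finset.mul_sum, ← Finset.sum_sub_distrib]
    refine Finset.sum_subset Finset.subset_union_left fun p _ hp => ?_
    have : f p = 0 := Finsupp.notMem_support_iff.1 hp
    rw [this]
    exact gain_zero u v p
  have hsub : (L.map fun x => gain u v x.1 (f x.1) - gain u v x.1 x.2).sum =
      (L.map fun x => gain u v x.1 (f x.1)).sum - (L.map fun x => gain u v x.1 x.2).sum :=
    sum_map_sub' _ _ _
  have hout : ∀ p ∈ n.primeFactors \ Ls, gain u v p (f p) ≤ θ := by
    intro p hp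
    rw [Finset.mem_sdiff, hLs, List.mem_toFinset] at hp
    have hpp := Nat.prime_of_mem_primeFactors hp.1
    exact h5 p _ hpp hp.2 (hpp.factorization_pos_of_dvd hn (Nat.dvd_of_mem_primeFactors hp.1))
  have hin : (L.map fun x => gain u v x.1 (f x.1)).sum ≤ (L.map fun x => gain u v x.1 x.2).sum :=
    List.sum_le_sum hle
  rw [hsum, hsub]
  by_cases hc1 : ∀ p ∈ n.primeFactors, p ∈ L.map Prod.fst
  · have hemp : n.primeFactors \ Ls = ∅ := by
      rw [Finset.sdiff_eq_empty_iff_subset]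
      intro p hp
      rw [hLs, List.mem_toFinset]
      exact hc1 p hp
    rw [hemp, Finset.sum_empty, zero_add]
    by_cases hc2 : ∀ x ∈ L, f x.1 ≤ x.2 + J
    · rcases le_or_gt ((L.map fun x => gain u v x.1 (f x.1)).sum)
        ((L.map fun x => gain u v x.1 x.2).sum + θ) with h' | h'
      · exact Or.inl h'
      · exact Or.inr ⟨hc1, hc2, by linarith⟩
    · left
      push Not at hc2
      obtain ⟨x, hx, hxf⟩ := hc2
      have h6 : gain u v x.1 x.2 - gain u v x.1 (f x.1) ≤
          (L.map fun x => gain u v x.1 x.2 - gain u v x.1 (f x.1)).sum := by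
        apply List.single_le_sum
        · intro y hy
          obtain ⟨z, hz, rfl⟩ := List.mem_map.1 hy
          linarith [hle z hz]
        · exact List.mem_map.2 ⟨x, hx, rfl⟩
      rw [sum_map_sub'] at h6
      linarith [h4 x hx _ hxf]
  · left
    push Not at hc1
    obtain ⟨p, hp, hpL⟩ := hc1
    have hp' : p ∈ n.primeFactors \ Ls := by
      rw [Finset.mem_sdiff, hLs, List.mem_toFinset]
      exact ⟨hp, hpL⟩
    have h6 : ∑ p ∈ n.primeFactors \ Ls, gain u v p (f p) ≤ θ := by
      rw [← Finset.sum_erase_add _ _ hp']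
      have : ∑ p ∈ (n.primeFactors \ Ls).erase p, gain u v p (f p) ≤ 0 :=
        Finset.sum_nonpos fun i hi => (hout i (Finset.mem_of_mem_erase hi)).trans hθ0
      linarith [hout p hp']
    linarith

/-- The number of divisors of the maximiser. -/
def tauOpt (L : List (ℕ × ℕ)) : ℕ := (L.map fun x => x.2 + 1).prod

/-- The abundancy index of the maximiser. -/
def abOpt (L : List (ℕ × ℕ)) : ℚ :=
  ((L.map fun x => sg x.1 x.2).prod : ℕ) / ((L.map fun x => x.1 ^ x.2).prod : ℕ)

/-- The certificate that, at `log τ(n) = T`, the upper bound for `σ(n) / n` which includes the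
loss of a factor `N / S` does not exceed `2.597 log (T + log 3)`. -/
def cellEnd (u v N S : ℕ) (L : List (ℕ × ℕ)) (T : ℚ) : Bool :=
  decide (1 / 4 ≤ rhsLo T / abOpt L) &&
  decide ((u * T - u * logLo (tauOpt L) - logLo (S / N)) / v ≤ logLo (rhsLo T / abOpt L))

lemma sum_gain_eq (h2 : ∀ x ∈ L, 2 ≤ x.1) :
    0 < abOpt L ∧ 0 < tauOpt L ∧
    (L.map fun x => gain u v x.1 x.2).sum = v * log (abOpt L) - u * log (tauOpt L) := by
  induction L with
  | nil => simp [abOpt, tauOpt]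
  | cons x l ih =>
    obtain ⟨i1, i2, i3⟩ := ih fun y hy => h2 y (List.mem_cons_of_mem _ hy)
    have hx := h2 x List.mem_cons_self
    have e1 : abOpt (x :: l) = (sg x.1 x.2 / x.1 ^ x.2 : ℚ) * abOpt l := by
      simp only [abOpt, List.map_cons, List.prod_cons]
      push_cast
      rw [mul_div_mul_comm]
    have e2 : tauOpt (x :: l) = (x.2 + 1) * tauOpt l := by simp [tauOpt]
    have hsg := sg_pos x.1 x.2
    have hx0 : 0 < x.1 := by omega
    have e3 : (((sg x.1 x.2 / x.1 ^ x.2 : ℚ)) : ℝ) = ab x.1 x.2 := by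
      unfold ab; push_cast; rfl
    refine ⟨by rw [e1]; positivity, by rw [e2]; positivity, ?_⟩
    have i1R : (0 : ℝ) < abOpt l := by exact_mod_cast i1
    rw [List.map_cons, List.sum_cons, i3, e1, e2, Rat.cast_mul, e3,
      log_mul (ab_pos hx _).ne' i1R.ne', gain]
    push_cast
    rw [log_mul (by positivity) (by positivity)]
    ring

/-- On a window `T₁ ≤ log τ(n) ≤ T₂` with valid certificates, the inequality holds unless `n` lies
in the finite search box. -/
lemma cell_window {T₁ T₂ : ℚ} (h : cellCheck u v q J N S L = true)
    (hT₁ : cellEnd u v N S L T₁ = true) (hT₂ : cellEnd u v N S L T₂ = true)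
    (hT : 0 ≤ T₁) (hv : 0 < v) {n : ℕ} (hn : n ≠ 0) (hn₁ : (T₁ : ℝ) ≤ log (tauFn n))
    (hn₂ : log (tauFn n) ≤ T₂) :
    (sigmaFn n : ℝ) / n ≤ 2597 / 1000 * log (log (3 * tauFn n)) ∨
    ((∀ p ∈ n.primeFactors, p ∈ L.map Prod.fst) ∧ (∀ x ∈ L, n.factorization x.1 ≤ x.2 + J) ∧
      log (N / S) <
        (L.map fun x => gain u v x.1 (n.factorization x.1) - gain u v x.1 x.2).sum) := by
  refine (cell_dichotomy h hn).imp_left fun hd => ?_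
  obtain ⟨hnd, hN, hNS, h2, -⟩ := cellCheck_spec h
  obtain ⟨i1, i2, i3⟩ := sum_gain_eq (u := u) (v := v) h2
  rw [i3] at hd
  have hvR : (0 : ℝ) < v := by exact_mod_cast hv
  have hS : 0 < S := hN.trans_le hNS
  have hθ : log ((N : ℝ) / S) ≤ -logLo (S / N) := by
    have := logLo_le (q := S / N) (by
      rw [le_div_iff₀ (by positivity)]
      have : (N : ℚ) ≤ S := by exact_mod_cast hNS
      linarith [(Nat.cast_nonneg N : (0 : ℚ) ≤ N)])
    rw [← inv_div, log_inv]
    push_cast at this ⊢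
    linarith
  have hτ : (logLo (tauOpt L) : ℝ) ≤ log (tauOpt L) := by
    have : (1 : ℚ) ≤ tauOpt L := by exact_mod_cast i2
    have := logLo_le (q := tauOpt L) (by linarith)
    simpa using this
  have hsig : (0 : ℝ) < (sigmaFn n : ℝ) / n := by
    rw [sigmaFn_eq hn]
    exact Finset.prod_pos fun p hp => ab_pos (Nat.prime_of_mem_primeFactors hp).two_le _
  have htau : (0 : ℝ) < tauFn n := by
    rw [tauFn_eq hn]; positivity
  set α : ℝ := log (abOpt L) + (- u * log (tauOpt L) + log (N / S)) / v with hα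
  have hend : ∀ T : ℚ, 0 ≤ T → cellEnd u v N S L T = true →
      exp (α + u / v * T) ≤ 2597 / 1000 * log (T + log 3) := by
    intro T hT0 hc
    simp only [cellEnd, Bool.and_eq_true, decide_eq_true_eq] at hc
    refine endpoint hT0 i1 ?_ hc.1 hc.2
    have hu : (u : ℝ) * logLo (tauOpt L) ≤ u * log (tauOpt L) := by gcongr
    have : α + u / v * T = (u * T - u * log (tauOpt L) + log (N / S)) / v + log (abOpt L) := by
      rw [hα]; ring
    rw [this]
    push_cast
    gcongr
    linarith
  have hT0 : (0 : ℝ) ≤ T₁ := by exact_mod_cast hT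
  have hT2 : 0 ≤ T₂ := by
    have : (T₁ : ℝ) ≤ T₂ := hn₁.trans hn₂
    exact hT.trans (by exact_mod_cast this)
  have hw := window hT0 hn₁ hn₂ (hend T₁ hT hT₁) (hend T₂ hT2 hT₂)
  rw [log_mul (by norm_num) htau.ne', add_comm (log 3)]
  refine le_trans ?_ hw
  rw [← log_le_iff_le_exp hsig, hα]
  have : log ((sigmaFn n : ℝ) / n) ≤ (v * log (abOpt L) - u * log (tauOpt L) +
      log (N / S) + u * log (tauFn n)) / v := by
    rw [le_div_iff₀ hvR]; linarith
  refine this.trans (le_of_eq ?_)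
  field_simp
  ring

end cell

/-! ### The windows without exceptions -/

/-- The primes up to `907`. -/
def smallPrimes : List ℕ :=
  [2, 3, 5, 7, 11, 13, 17, 19, 23, 29, 31, 37, 41, 43, 47, 53, 59, 61, 67, 71, 73, 79, 83, 89, 97,
   101, 103, 107, 109, 113, 127, 131, 137, 139, 149, 151, 157, 163, 167, 173, 179, 181, 191,
   193, 197, 199, 211, 223, 227, 229, 233, 239, 241, 251, 257, 263, 269, 271, 277, 281, 283,
   293, 307, 311, 313, 317, 331, 337, 347, 349, 353, 359, 367, 373, 379, 383, 389, 397, 401,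
   409, 419, 421, 431, 433, 439, 443, 449, 457, 461, 463, 467, 479, 487, 491, 499, 503, 509,
   521, 523, 541, 547, 557, 563, 569, 571, 577, 587, 593, 599, 601, 607, 613, 617, 619, 631,
   641, 643, 647, 653, 659, 661, 673, 677, 683, 691, 701, 709, 719, 727, 733, 739, 743, 751,
   757, 761, 769, 773, 787, 797, 809, 811, 821, 823, 827, 829, 839, 853, 857, 859, 863, 877,
   881, 883, 887, 907]

/-- The primes below `q`, the first ones with the exponents in `es` and the others with
exponent `1`. -/
def optList (q : ℕ) (es : List ℕ) : List (ℕ × ℕ) :=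
  ((smallPrimes.takeWhile fun p => Nat.ble (p + 1) q).zipIdx).map fun x => (x.1, es.getD x.2 1)

/-- All certificates for a window `[T₁, T₂]` with slope `u / v`. -/
def plainCheck (u v q : ℕ) (es : List ℕ) (T₁ T₂ : ℚ) : Bool :=
  cellCheck u v q 1 1 1 (optList q es) && cellEnd u v 1 1 (optList q es) T₁ &&
    cellEnd u v 1 1 (optList q es) T₂ && decide (0 ≤ T₁) && Nat.ble 1 v

lemma plain_window {u v q : ℕ} {es : List ℕ} {T₁ T₂ : ℚ} (h : plainCheck u v q es T₁ T₂ = true)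
    {n : ℕ} (hn : n ≠ 0) (hn₁ : (T₁ : ℝ) ≤ log (tauFn n)) (hn₂ : log (tauFn n) ≤ T₂) :
    (sigmaFn n : ℝ) / n ≤ 2597 / 1000 * log (log (3 * tauFn n)) := by
  simp only [plainCheck, Bool.and_eq_true, decide_eq_true_eq, Nat.ble_eq] at h
  obtain ⟨⟨⟨⟨h1, h2⟩, h3⟩, h4⟩, h5⟩ := h
  refine (cell_window h1 h2 h3 h4 h5 hn hn₁ hn₂).resolve_right ?_
  rintro ⟨-, hJ, hlt⟩
  obtain ⟨-, -, -, -, hg, -⟩ := cellCheck_spec h1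
  have : ((optList q es).map fun x =>
      gain u v x.1 (n.factorization x.1) - gain u v x.1 x.2).sum ≤ 0 := by
    rw [sum_map_sub']
    have := List.sum_le_sum (f := fun x : ℕ × ℕ => gain u v x.1 (n.factorization x.1))
      (g := fun x => gain u v x.1 x.2) (l := optList q es) fun x hx => hg x hx _ (hJ x hx)
    linarith
  have e : log (((1 : ℕ) : ℝ) / ((1 : ℕ) : ℝ)) = 0 := by simp
  rw [e] at hlt
  linarith

lemma plain_0 : plainCheck 3 7 3 [] (690 / 1000) (2599 / 1000) = true := by
  decide +kernel

lemma plain_1 : plainCheck 1 10 17 [4, 2] (2599 / 1000) (7763 / 1000) = true := by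
  decide +kernel

lemma plain_2 : plainCheck 2 57 41 [6, 4, 2, 2] (7763 / 1000) (14063 / 1000) = true := by
  decide +kernel

lemma plain_3 : plainCheck 1 51 79 [7, 4, 3, 2] (14063 / 1000) (19761 / 1000) = true := by
  decide +kernel

lemma plain_4 : plainCheck 1 72 107 [8, 5, 3, 2, 2] (19761 / 1000) (24239 / 1000) = true := by
  decide +kernel

lemma plain_5 : plainCheck 1 79 127 [8, 5, 3, 2, 2, 2] (24239 / 1000) (24918 / 1000) = true := by
  decide +kernel

lemma plain_6 : plainCheck 1 109 157 [9, 5, 3, 2, 2, 2] (29321 / 1000) (31891 / 1000) = true := by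
  decide +kernel

lemma plain_7 :
    plainCheck 1 128 191 [9, 5, 3, 3, 2, 2, 2] (31891 / 1000) (37679 / 1000) = true := by
  decide +kernel

lemma plain_8 :
    plainCheck 1 169 251 [9, 6, 3, 3, 2, 2, 2, 2] (37679 / 1000) (49837 / 1000) = true := by
  decide +kernel

lemma plain_9 :
    plainCheck 1 271 397 [10, 6, 4, 3, 2, 2, 2, 2, 2] (49837 / 1000) (80710 / 1000) = true := by
  decide +kernel

lemma plain_10 :
    plainCheck 1 629 907 [11, 7, 4, 4, 3, 2, 2, 2, 2, 2, 2, 2] (80710 / 1000) (194074 / 1000) = true := by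
  decide +kernel

/-- The windows without exceptions below the exceptional one. -/
lemma plain_low {n : ℕ} (hn : n ≠ 0) (h₁ : (690 / 1000 : ℝ) ≤ log (tauFn n))
    (h₂ : log (tauFn n) ≤ 24918 / 1000) :
    (sigmaFn n : ℝ) / n ≤ 2597 / 1000 * log (log (3 * tauFn n)) := by
  rcases le_total (log (tauFn n)) (2599 / 1000) with h | h
  · exact plain_window plain_0 hn (by push_cast; linarith) (by push_cast; linarith)
  rcases le_total (log (tauFn n)) (7763 / 1000) with h | h
  · exact plain_window plain_1 hn (by push_cast; linarith) (by push_cast; linarith)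
  rcases le_total (log (tauFn n)) (14063 / 1000) with h | h
  · exact plain_window plain_2 hn (by push_cast; linarith) (by push_cast; linarith)
  rcases le_total (log (tauFn n)) (19761 / 1000) with h | h
  · exact plain_window plain_3 hn (by push_cast; linarith) (by push_cast; linarith)
  rcases le_total (log (tauFn n)) (24239 / 1000) with h | h
  · exact plain_window plain_4 hn (by push_cast; linarith) (by push_cast; linarith)
  exact plain_window plain_5 hn (by push_cast; linarith) (by push_cast; linarith)

/-- The windows without exceptions above the exceptional one. -/
lemma plain_high {n : ℕ} (hn : n ≠ 0) (h₁ : (29321 / 1000 : ℝ) ≤ log (tauFn n))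
    (h₂ : log (tauFn n) ≤ 194074 / 1000) :
    (sigmaFn n : ℝ) / n ≤ 2597 / 1000 * log (log (3 * tauFn n)) := by
  rcases le_total (log (tauFn n)) (31891 / 1000) with h | h
  · exact plain_window plain_6 hn (by push_cast; linarith) (by push_cast; linarith)
  rcases le_total (log (tauFn n)) (37679 / 1000) with h | h
  · exact plain_window plain_7 hn (by push_cast; linarith) (by push_cast; linarith)
  rcases le_total (log (tauFn n)) (49837 / 1000) with h | h
  · exact plain_window plain_8 hn (by push_cast; linarith) (by push_cast; linarith)
  rcases le_total (log (tauFn n)) (80710 / 1000) with h | h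
  · exact plain_window plain_9 hn (by push_cast; linarith) (by push_cast; linarith)
  exact plain_window plain_10 hn (by push_cast; linarith) (by push_cast; linarith)

/-! ### The exceptional window -/

section search

variable (u v J N S : ℕ)

/-- An upper bound for `S` times the relative loss caused by replacing the optimal exponent `x.2`
of the prime `x.1` by `a`. -/
def ratioUp (x : ℕ × ℕ) (a : ℕ) : ℕ :=
  S * (Nat.pow (sg x.1 a * Nat.pow x.1 x.2) v * Nat.pow (x.2 + 1) u) /
    (Nat.pow (sg x.1 x.2 * Nat.pow x.1 a) v * Nat.pow (a + 1) u) + 1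

/-- Depth-first search over the exponents of the primes of a list: `P / S` bounds the relative
product of the losses so far, a branch is cut once this is at most `N / S`, and the numbers
`n`, `σ(n)`, `τ(n)` found at the leaves are passed to `leaf`. -/
def search (leaf : ℕ → ℕ → ℕ → Bool) : List (ℕ × ℕ) → ℕ → ℕ → ℕ → ℕ → Bool
  | [], _, n, s, t => leaf n s t
  | x :: l, P, n, s, t => (List.range (x.2 + J + 1)).all fun a =>
      Nat.ble (P * ratioUp u v S x a / S + 1) N ||
        search leaf l (P * ratioUp u v S x a / S + 1) (n * Nat.pow x.1 a) (s * sg x.1 a)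
          (t * (a + 1))

variable {u v J N S}

lemma exp_gain {p : ℕ} (hp : 2 ≤ p) (a : ℕ) :
    exp (gain u v p a) = ab p a ^ v / ((a : ℝ) + 1) ^ u := by
  have := ab_pos hp a
  rw [gain, exp_sub, ← log_pow, ← log_pow, exp_log (by positivity), exp_log (by positivity)]

lemma le_ratioUp {x : ℕ × ℕ} (hx : 2 ≤ x.1) (a : ℕ) :
    S * exp (gain u v x.1 a - gain u v x.1 x.2) ≤ ratioUp u v S x a := by
  have hx0 : (0 : ℝ) < x.1 := by positivity
  have hs1 : (0 : ℝ) < sg x.1 x.2 := by exact_mod_cast sg_pos _ _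
  have hs1' := sg_pos x.1 x.2
  have h := Nat.lt_div_mul_add (a := S * ((sg x.1 a * x.1 ^ x.2) ^ v * (x.2 + 1) ^ u))
    (b := (sg x.1 x.2 * x.1 ^ a) ^ v * (a + 1) ^ u) (by positivity)
  rw [← Nat.succ_mul] at h
  have h' : (S : ℝ) * ((sg x.1 a * x.1 ^ x.2) ^ v * (x.2 + 1) ^ u) ≤
      ratioUp u v S x a * ((sg x.1 x.2 * x.1 ^ a) ^ v * (a + 1) ^ u) := by
    exact_mod_cast h.le
  rw [exp_sub, exp_gain hx, exp_gain hx]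
  unfold ab
  rw [div_pow, div_pow, div_div ((sg x.1 a : ℝ) ^ v), div_div ((sg x.1 x.2 : ℝ) ^ v),
    div_div_div_eq, mul_div_assoc', div_le_iff₀ (by positivity)]
  rw [mul_pow, mul_pow] at h'
  linarith

/-- The search visits every exponent vector of the box whose total loss is below the threshold. -/
lemma search_sound {leaf : ℕ → ℕ → ℕ → Bool} (hS : 0 < S) (f : ℕ → ℕ) (l : List (ℕ × ℕ)) :
    ∀ P n s t : ℕ, search u v J N S leaf l P n s t = true →
    (∀ x ∈ l, 2 ≤ x.1 ∧ f x.1 ≤ x.2 + J ∧ gain u v x.1 (f x.1) ≤ gain u v x.1 x.2) →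
    (N : ℝ) < P * exp (l.map fun x => gain u v x.1 (f x.1) - gain u v x.1 x.2).sum →
    leaf (n * (l.map fun x => x.1 ^ f x.1).prod) (s * (l.map fun x => sg x.1 (f x.1)).prod)
      (t * (l.map fun x => f x.1 + 1).prod) = true := by
  induction l with
  | nil =>
    intro P n s t h _ _
    simpa [search] using h
  | cons x l ih =>
    intro P n s t h hf hN
    obtain ⟨hx, hfx, -⟩ := hf x List.mem_cons_self
    have hfl := fun y hy => hf y (List.mem_cons_of_mem x hy)
    have hs0 : (l.map fun x => gain u v x.1 (f x.1) - gain u v x.1 x.2).sum ≤ 0 := by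
      rw [sum_map_sub', sub_nonpos]
      exact List.sum_le_sum fun z hz => (hfl z hz).2.2
    set W := (l.map fun x => gain u v x.1 (f x.1) - gain u v x.1 x.2).sum
    set P' := P * ratioUp u v S x (f x.1) / S + 1 with hP'
    have hSR : (0 : ℝ) < S := by exact_mod_cast hS
    have hPP : P * exp (gain u v x.1 (f x.1) - gain u v x.1 x.2) ≤ P' := by
      have h1 := le_ratioUp (u := u) (v := v) (S := S) hx (f x.1)
      have h2 := Nat.lt_div_mul_add (a := P * ratioUp u v S x (f x.1)) hS
      rw [← Nat.succ_mul] at h2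
      have h3 : (P : ℝ) * ratioUp u v S x (f x.1) ≤ P' * S := by exact_mod_cast h2.le
      have h4 : (P : ℝ) * (S * exp (gain u v x.1 (f x.1) - gain u v x.1 x.2)) ≤ P' * S :=
        (mul_le_mul_of_nonneg_left h1 (Nat.cast_nonneg P)).trans h3
      nlinarith
    have hN' : (N : ℝ) < P' * exp W := by
      refine hN.trans_le ?_
      rw [List.map_cons, List.sum_cons, exp_add, ← mul_assoc]
      gcongr
    have hlt : N < P' := by
      have : (N : ℝ) < P' := hN'.trans_le <|
        mul_le_of_le_one_right (Nat.cast_nonneg _) (exp_le_one_iff.2 hs0)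
      exact_mod_cast this
    simp only [search, List.all_eq_true, List.mem_range, Bool.or_eq_true, Nat.ble_eq] at h
    have h5 := (h (f x.1) (by omega)).resolve_left (by omega)
    have := ih _ _ _ _ h5 hfl hN'
    simpa [mul_assoc, mul_comm, mul_left_comm] using this

end search

/-- The maximiser for the slope `1 / 94`, with the exponents of further primes set to `0`. The
primes for which only one exponent is affordable come first, which keeps the search tree thin. -/
def excOpt : List (ℕ × ℕ) :=
  [(11, 2), (19, 1), (23, 1), (29, 1), (31, 1), (37, 1), (41, 1), (43, 1), (47, 1), (53, 1),
   (59, 1), (61, 1), (67, 1), (71, 1), (73, 1), (79, 1), (83, 1), (89, 1), (97, 1), (101, 1),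
   (103, 1), (107, 1), (109, 1), (113, 1), (167, 0), (163, 0), (13, 2), (5, 3), (17, 1), (157,
   0), (151, 0), (3, 5), (149, 0), (7, 2), (127, 1), (131, 1), (139, 0), (2, 8), (137, 0)]

/-- The factorization with `2 ^ a`, the common part of the exceptional numbers, and the primes
of `l`. -/
def excFact (a : ℕ) (l : List ℕ) : List (ℕ × ℕ) :=
  [(2, a), (3, 5), (5, 3), (7, 2), (11, 2), (13, 2)] ++
    ([17, 19, 23, 29, 31, 37, 41, 43, 47, 53, 59, 61, 67, 71, 73, 79, 83, 89, 97, 101, 103, 107,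
      109, 113] ++ l).map fun p => (p, 1)

/-- The factorizations of the twelve exceptional numbers. -/
def exc : List (List (ℕ × ℕ)) :=
  [excFact 8 [], excFact 8 [127], excFact 8 [127, 131], excFact 8 [127, 131, 137],
   excFact 8 [127, 131, 137, 139], excFact 8 [131], excFact 8 [127, 131, 139],
   excFact 9 [], excFact 9 [127], excFact 9 [127, 131], excFact 9 [127, 131, 137],
   excFact 9 [127, 131, 137, 139]]

/-- The number with a given factorization. -/
def ofFact (l : List (ℕ × ℕ)) : ℕ := (l.map fun x => x.1 ^ x.2).prod

/-- At a leaf, `n` is exceptional or satisfies the inequality. -/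
def excLeaf (n s t : ℕ) : Bool :=
  (decide (1 / 4 ≤ logLo (3 * t)) && decide ((s : ℚ) / n ≤ 2597 / 1000 * logLo (logLo (3 * t)))) ||
    (exc.map ofFact).contains n

lemma excCell : cellCheck 1 94 173 3 8685 10000 excOpt = true := by decide +kernel

lemma excEnd₁ : cellEnd 1 94 8685 10000 excOpt (24918 / 1000) = true := by decide +kernel

lemma excEnd₂ : cellEnd 1 94 8685 10000 excOpt (29321 / 1000) = true := by decide +kernel

/-- The threshold is `8685 / 10000`, rescaled to reduce rounding. -/
lemma excSearch : search 1 94 3 868500000 1000000000 excLeaf excOpt 1000000000 1 1 1 = true := by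
  decide +kernel

lemma factorization_list {L : List (ℕ × ℕ)} (hnd : (L.map Prod.fst).Nodup) {n : ℕ} {M : Type*}
    [CommMonoid M] (g : ℕ → ℕ → M) (hg : ∀ p, g p 0 = 1)
    (hL : ∀ p ∈ n.primeFactors, p ∈ L.map Prod.fst) :
    ∏ p ∈ n.primeFactors, g p (n.factorization p) =
      (L.map fun x => g x.1 (n.factorization x.1)).prod := by
  have e : (L.map fun x => g x.1 (n.factorization x.1)).prod =
      ∏ p ∈ (L.map Prod.fst).toFinset, g p (n.factorization p) := by
    rw [List.prod_toFinset _ hnd, List.map_map]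
    rfl
  rw [e]
  refine Finset.prod_subset (fun p hp => List.mem_toFinset.2 (hL p hp)) fun p _ hp => ?_
  have : n.factorization p = 0 := Finsupp.notMem_support_iff.1 hp
  rw [this, hg]

lemma tauFn_pos {n : ℕ} (hn : n ≠ 0) : 0 < tauFn n := by
  rw [tauFn_eq hn]
  positivity

/-- On the exceptional window, every violation of the inequality is in the list. -/
lemma exc_window {n : ℕ} (hn : n ≠ 0) (hn₁ : (24918 / 1000 : ℝ) ≤ log (tauFn n))
    (hn₂ : log (tauFn n) ≤ 29321 / 1000) :
    (sigmaFn n : ℝ) / n ≤ 2597 / 1000 * log (log (3 * tauFn n)) ∨ n ∈ exc.map ofFact := by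
  rcases cell_window excCell excEnd₁ excEnd₂ (by norm_num) (by norm_num) hn
    (by push_cast; exact hn₁) (by push_cast; exact hn₂) with h | ⟨hL, hJ, hlt⟩
  · exact Or.inl h
  obtain ⟨hnd, -, -, h2, hg, -⟩ := cellCheck_spec excCell
  have hs := search_sound (S := 1000000000) (Nat.succ_pos _) n.factorization excOpt _ _ _ _ excSearch
    (fun x hx => ⟨h2 x hx, hJ x hx, hg x hx _ (hJ x hx)⟩) (by
      rw [log_lt_iff_lt_exp (by norm_num)] at hlt
      push_cast at hlt ⊢
      linarith)
  have e1 : (excOpt.map fun x => x.1 ^ n.factorization x.1).prod = n := by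
    rw [← factorization_list hnd (fun p a => p ^ a) (fun p => pow_zero p) hL]
    exact Nat.prod_factorization_pow_eq_self hn
  have e2 : (excOpt.map fun x => sg x.1 (n.factorization x.1)).prod = sigmaFn n := by
    rw [← factorization_list hnd sg sg_zero hL, sigmaFn, Nat.sum_divisors hn]
    exact Finset.prod_congr rfl fun p _ => sg_eq _ _
  have e3 : (excOpt.map fun x => n.factorization x.1 + 1).prod = tauFn n := by
    rw [← factorization_list hnd (fun _ a => a + 1) (fun _ => rfl) hL, tauFn_eq hn]
  rw [one_mul, one_mul, one_mul, e1, e2, e3] at hs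
  simp only [excLeaf, Bool.or_eq_true, Bool.and_eq_true, decide_eq_true_eq,
    List.contains_iff_mem] at hs
  refine hs.imp_left fun hs => ?_
  have ht : (1 : ℚ) ≤ tauFn n := by
    exact_mod_cast tauFn_pos hn
  have l1 := logLo_le (q := 3 * tauFn n) (by linarith)
  have l2 := logLo_le hs.1
  have hpos : (0 : ℝ) < logLo (3 * tauFn n) := by
    have : 0 < logLo (3 * tauFn n) := by linarith [hs.1]
    exact_mod_cast this
  have l3 := log_le_log hpos l1
  have l4 : (((sigmaFn n : ℚ) / n : ℚ) : ℝ) ≤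
      ((2597 / 1000 * logLo (logLo (3 * tauFn n)) : ℚ) : ℝ) := Rat.cast_le.mpr hs.2
  push_cast at l1 l2 l3 l4
  linarith

lemma ofFact_spec {l : List (ℕ × ℕ)} (hnd : (l.map Prod.fst).Nodup) (hp : ∀ x ∈ l, x.1.Prime) :
    sigmaFn (ofFact l) = (l.map fun x => sg x.1 x.2).prod ∧
      tauFn (ofFact l) = (l.map fun x => x.2 + 1).prod := by
  induction l with
  | nil => simp [sigmaFn, tauFn, ofFact]
  | cons x l ih =>
    rw [List.map_cons, List.nodup_cons] at hnd
    obtain ⟨i1, i2⟩ := ih hnd.2 fun y hy => hp y (List.mem_cons_of_mem x hy)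
    have hx := hp x List.mem_cons_self
    have e : ofFact (x :: l) = x.1 ^ x.2 * ofFact l := rfl
    have hco : Nat.Coprime (x.1 ^ x.2) (ofFact l) := by
      apply Nat.Coprime.pow_left
      rw [ofFact, Nat.coprime_list_prod_right_iff]
      intro m hm
      obtain ⟨y, hy, rfl⟩ := List.mem_map.1 hm
      apply Nat.Coprime.pow_right
      rw [Nat.coprime_primes hx (hp y (List.mem_cons_of_mem x hy))]
      intro h
      exact hnd.1 (List.mem_map.2 ⟨y, hy, h.symm⟩)
    rw [e]
    refine ⟨?_, ?_⟩
    · rw [List.map_cons, List.prod_cons, ← i1, sigmaFn, hco.sum_divisors_mul,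
        Nat.sum_divisors_prime_pow hx, sg_eq]
      rfl
    · rw [List.map_cons, List.prod_cons, ← i2, tauFn, hco.card_divisors_mul,
        Nat.divisors_prime_pow hx, Finset.card_map, Finset.card_range]
      rfl

lemma exc_prime : ∀ p ∈ [2, 3, 5, 7, 11, 13, 17, 19, 23, 29, 31, 37, 41, 43, 47, 53, 59, 61, 67, 71,
    73, 79, 83, 89, 97, 101, 103, 107, 109, 113, 127, 131, 137, 139], Nat.Prime p := by
  norm_num

/-- The certificate that a factorization gives an exceptional number. -/
def excTest (l : List (ℕ × ℕ)) : Bool :=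
  decide (l.map Prod.fst).Nodup &&
  (l.all fun x => [2, 3, 5, 7, 11, 13, 17, 19, 23, 29, 31, 37, 41, 43, 47, 53, 59, 61, 67, 71,
    73, 79, 83, 89, 97, 101, 103, 107, 109, 113, 127, 131, 137, 139].contains x.1) &&
  Nat.ble 2 (ofFact l) && Nat.ble 1 (l.map fun x => x.2 + 1).prod &&
  decide (1 ≤ logHi (3 * ((l.map fun x => x.2 + 1).prod : ℕ))) &&
  decide (2597 / 1000 * logHi (logHi (3 * ((l.map fun x => x.2 + 1).prod : ℕ))) <
    (((l.map fun x => sg x.1 x.2).prod : ℕ) / (ofFact l : ℕ) : ℚ))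

lemma exc_test : exc.all excTest = true := by decide +kernel

lemma exc_mem {n : ℕ} (hn : n ∈ exc.map ofFact) :
    2 ≤ n ∧ 2597 / 1000 * log (log (3 * tauFn n)) < (sigmaFn n : ℝ) / n := by
  obtain ⟨l, hl, rfl⟩ := List.mem_map.1 hn
  have h := List.all_eq_true.1 exc_test l hl
  simp only [excTest, Bool.and_eq_true, decide_eq_true_eq, List.all_eq_true, Nat.ble_eq,
    List.contains_iff_mem] at h
  obtain ⟨⟨⟨⟨⟨h1, h2⟩, h3⟩, h4⟩, h5⟩, h6⟩ := h
  obtain ⟨e1, e2⟩ := ofFact_spec h1 fun x hx => exc_prime _ (h2 x hx)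
  refine ⟨h3, ?_⟩
  rw [← e2] at h4 h5 h6
  rw [← e1] at h6
  have ht : (1 : ℚ) ≤ tauFn (ofFact l) := by exact_mod_cast h4
  have htR : (1 : ℝ) ≤ tauFn (ofFact l) := by exact_mod_cast h4
  have l1 := le_logHi (q := 3 * tauFn (ofFact l)) (by linarith)
  have l2 := le_logHi h5
  have l4 : ((2597 / 1000 * logHi (logHi (3 * tauFn (ofFact l))) : ℚ) : ℝ) <
      (((sigmaFn (ofFact l) : ℚ) / (ofFact l : ℕ) : ℚ) : ℝ) := Rat.cast_lt.mpr h6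
  push_cast at l1 l2 l4
  have l3 := log_le_log (log_pos (by linarith)) l1
  linarith

lemma exc_nodup : (exc.map ofFact).Nodup := by decide +kernel

/-! ### Sieving below `2 ^ 17` inside the kernel -/

/-- The primes up to `361`. -/
def sievePrimes : List ℕ := smallPrimes.takeWhile fun p => Nat.ble p 361

/-- The product of `sievePrimes`. -/
def sieveProd : ℕ :=
  33145029365917644537041586451002838777754047982048976093256545773949681076083753038263261851007891975336318712022358509317861766127318306017798990

/-- A primality test valid below `2 ^ 17 < 363 ^ 2`. -/
def isp (n : ℕ) : Bool :=
  cond (Nat.ble n 361) (sievePrimes.contains n) (Nat.beq (Nat.gcd n sieveProd) 1)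

lemma sieveProd_eq : sieveProd = sievePrimes.prod := by decide +kernel

lemma sievePrimes_check : (sievePrimes.all fun p => Nat.ble 2 p && Nat.ble p 361 &&
    (List.range p).all fun m => Nat.ble m 1 || !(Nat.beq (p % m) 0)) &&
    ((List.range 363).all fun m => Nat.ble m 1 || sievePrimes.contains m ||
    sievePrimes.any fun p => Nat.ble (p + 1) m && Nat.beq (m % p) 0) = true := by
  decide +kernel

lemma mem_sievePrimes {p : ℕ} : p ∈ sievePrimes ↔ p.Prime ∧ p < 363 := by
  have h := sievePrimes_check
  simp only [Bool.and_eq_true, List.all_eq_true, Nat.ble_eq, List.mem_range, Bool.or_eq_true,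
    Bool.not_eq_true', List.contains_iff_mem, List.any_eq_true, Nat.beq_eq,
    decide_eq_true_eq] at h
  obtain ⟨h1, h2⟩ := h
  constructor
  · intro hp
    obtain ⟨⟨h3, h4⟩, h5⟩ := h1 p hp
    refine ⟨Nat.prime_def_lt.2 ⟨h3, fun m hm hd => ?_⟩, by omega⟩
    rcases h5 m hm with h | h
    · have := Nat.pos_of_dvd_of_pos hd (by omega)
      omega
    · have := Nat.mod_eq_zero_of_dvd hd
      rw [this] at h
      simp at h
  · rintro ⟨hp, hlt⟩
    rcases h2 p hlt with (h | h) | ⟨x, hx, h⟩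
    · have := hp.two_le; omega
    · exact h
    · have hd : x ∣ p := Nat.dvd_of_mod_eq_zero h.2
      rcases (Nat.dvd_prime hp).1 hd with h' | h'
      · have := (h1 x hx).1.1; omega
      · have := h.1; omega

lemma isp_iff {n : ℕ} (hn : n < 2 ^ 17) : isp n = true ↔ n.Prime := by
  unfold isp
  by_cases h : n ≤ 361
  · rw [Nat.ble_eq_true_of_le h, cond_true, List.contains_iff_mem, mem_sievePrimes]
    exact ⟨fun h => h.1, fun h' => ⟨h', by omega⟩⟩
  · have : Nat.ble n 361 = false := by
      rw [← Bool.not_eq_true, Nat.ble_eq]; exact h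
    rw [this, cond_false, Nat.beq_eq]
    change Nat.Coprime n sieveProd ↔ _
    rw [sieveProd_eq]
    constructor
    · intro hco
      by_contra hnp
      have h1 : n.minFac.Prime := Nat.minFac_prime (by omega)
      have h2 := Nat.minFac_sq_le_self (by omega) hnp
      have h3 : n.minFac < 363 := by nlinarith
      have h4 : n.minFac ∣ sievePrimes.prod := List.dvd_prod (mem_sievePrimes.2 ⟨h1, h3⟩)
      exact Nat.not_coprime_of_dvd_of_dvd h1.one_lt (Nat.minFac_dvd n) h4 hco
    · intro hp
      rw [Nat.coprime_list_prod_right_iff]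
      intro m hm
      have h1 := (mem_sievePrimes.1 hm).1
      rw [Nat.coprime_primes hp h1]
      rintro rfl
      have h2 := (mem_sievePrimes.1 hm).2
      have h3 : n = 362 := by omega
      rw [h3] at h1
      norm_num at h1

/-- The sum of `f` over `[a, a + 2 ^ k)`, split in halves so that the recursion depth is `k`;
written with raw recursors for fast kernel evaluation. -/
noncomputable def treeSum (f : ℕ → ℕ) (k : ℕ) : ℕ → ℕ :=
  Nat.rec (fun a => f a) (fun k ih a => Nat.add (ih a) (ih (Nat.add a (Nat.pow 2 k)))) k

/-- The product of `f` over `[a, a + 2 ^ k)`. -/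
noncomputable def treeProd (f : ℕ → ℕ) (k : ℕ) : ℕ → ℕ :=
  Nat.rec (fun a => f a) (fun k ih a => Nat.mul (ih a) (ih (Nat.add a (Nat.pow 2 k)))) k

lemma treeSum_eq (f : ℕ → ℕ) (k : ℕ) :
    ∀ a, treeSum f k a = ∑ i ∈ Finset.Ico a (a + 2 ^ k), f i := by
  induction k with
  | zero => intro a; simp [treeSum]
  | succ k ih =>
    intro a
    have : treeSum f (k + 1) a = treeSum f k a + treeSum f k (a + 2 ^ k) := rfl
    rw [this, ih, ih, Finset.sum_Ico_consecutive _ (Nat.le_add_right _ _) (Nat.le_add_right _ _)]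
    congr 2
    rw [pow_succ]; ring

lemma treeProd_eq (f : ℕ → ℕ) (k : ℕ) :
    ∀ a, treeProd f k a = ∏ i ∈ Finset.Ico a (a + 2 ^ k), f i := by
  induction k with
  | zero => intro a; simp [treeProd]
  | succ k ih =>
    intro a
    have : treeProd f (k + 1) a = treeProd f k a * treeProd f k (a + 2 ^ k) := rfl
    rw [this, ih, ih, Finset.prod_Ico_consecutive _ (Nat.le_add_right _ _) (Nat.le_add_right _ _)]
    congr 2
    rw [pow_succ]; ring

lemma treeSum_primes {k : ℕ} (hk : k ≤ 17) (f : ℕ → ℕ) :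
    treeSum (fun n => cond (isp n) (f n) 0) k 0 = ∑ p ∈ Nat.primesBelow (2 ^ k), f p := by
  rw [treeSum_eq, Nat.primesBelow, Finset.sum_filter, zero_add, Nat.Ico_zero_eq_range]
  refine Finset.sum_congr rfl fun n hn => ?_
  have := isp_iff ((Finset.mem_range.1 hn).trans_le (Nat.pow_le_pow_right (by norm_num) hk))
  by_cases hp : n.Prime
  · rw [this.2 hp, cond_true, if_pos hp]
  · rw [Bool.eq_false_iff.2 (mt this.1 hp), cond_false, if_neg hp]

lemma treeProd_primes {k : ℕ} (hk : k ≤ 17) (f : ℕ → ℕ) :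
    treeProd (fun n => cond (isp n) (f n) 1) k 0 = ∏ p ∈ Nat.primesBelow (2 ^ k), f p := by
  rw [treeProd_eq, Nat.primesBelow, Finset.prod_filter, zero_add, Nat.Ico_zero_eq_range]
  refine Finset.prod_congr rfl fun n hn => ?_
  have := isp_iff ((Finset.mem_range.1 hn).trans_le (Nat.pow_le_pow_right (by norm_num) hk))
  by_cases hp : n.Prime
  · rw [this.2 hp, cond_true, if_pos hp]
  · rw [Bool.eq_false_iff.2 (mt this.1 hp), cond_false, if_neg hp]

/-- The certificate that there are `c` primes below `2 ^ k` and that the product of `p / (p - 1)`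
over them is at most `F / 10000`. -/
noncomputable def eulerCheck (k c F : ℕ) : Bool :=
  Nat.ble k 17 && Nat.beq (treeSum (fun n => cond (isp n) 1 0) k 0) c &&
  Nat.ble (Nat.mul 10000 (treeProd (fun n => cond (isp n) n 1) k 0))
    (Nat.mul F (treeProd (fun n => cond (isp n) (Nat.sub n 1) 1) k 0))

/-- `∑ log (p / (p - 1))` over the primes `p < K`. -/
noncomputable def eulerLog (K : ℕ) : ℝ := ∑ p ∈ Nat.primesBelow K, log ((p : ℝ) / (p - 1))

lemma eulerCheck_spec {k c F : ℕ} (h : eulerCheck k c F = true) :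
    (Nat.primesBelow (2 ^ k)).card = c ∧ eulerLog (2 ^ k) ≤ log ((F / 10000 : ℚ) : ℝ) := by
  simp only [eulerCheck, Bool.and_eq_true, Nat.ble_eq, Nat.beq_eq, Nat.mul_eq] at h
  obtain ⟨⟨hk, h1⟩, h2⟩ := h
  rw [treeSum_primes hk fun _ => 1] at h1
  rw [treeProd_primes hk fun p => p, treeProd_primes hk fun p => Nat.sub p 1] at h2
  refine ⟨by simpa using h1, ?_⟩
  have hp : ∀ p ∈ Nat.primesBelow (2 ^ k), (2 : ℝ) ≤ p := fun p hp => by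
    exact_mod_cast (Nat.prime_of_mem_primesBelow hp).two_le
  unfold eulerLog
  rw [← log_prod (fun p hpp => by
    have := hp p hpp
    exact (div_pos (by linarith) (by linarith)).ne')]
  apply log_le_log
  · exact Finset.prod_pos fun p hpp => by
      have := hp p hpp
      exact div_pos (by linarith) (by linarith)
  · have e : ((∏ p ∈ Nat.primesBelow (2 ^ k), Nat.sub p 1 : ℕ) : ℝ) =
        ∏ p ∈ Nat.primesBelow (2 ^ k), ((p : ℝ) - 1) := by
      rw [Nat.cast_prod]
      refine Finset.prod_congr rfl fun p hpp => ?_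
      have := (Nat.prime_of_mem_primesBelow hpp).two_le
      change ((p - 1 : ℕ) : ℝ) = _
      push_cast [Nat.cast_sub (show 1 ≤ p by omega)]; ring
    have hpos : (0 : ℝ) < ∏ p ∈ Nat.primesBelow (2 ^ k), ((p : ℝ) - 1) :=
      Finset.prod_pos fun p hpp => by linarith [hp p hpp]
    have h2' : (10000 : ℝ) * ((∏ p ∈ Nat.primesBelow (2 ^ k), p : ℕ) : ℝ) ≤
        F * ((∏ p ∈ Nat.primesBelow (2 ^ k), Nat.sub p 1 : ℕ) : ℝ) := by exact_mod_cast h2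
    rw [e] at h2'
    push_cast at h2' ⊢
    rw [Finset.prod_div_distrib, div_le_div_iff₀ hpos (by norm_num)]
    linarith

/-! ### Numbers with many prime factors -/

lemma omega_le {n : ℕ} (hn : n ≠ 0) : (n.primeFactors.card : ℝ) * log 2 ≤ log (tauFn n) := by
  rw [log_tau hn, ← nsmul_eq_mul]
  refine Finset.card_nsmul_le_sum _ _ _ fun p hp => ?_
  have : 1 ≤ n.factorization p := (Nat.prime_of_mem_primeFactors hp).factorization_pos_of_dvd hn
    (Nat.dvd_of_mem_primeFactors hp)
  have : (1 : ℝ) ≤ n.factorization p := by exact_mod_cast this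
  exact log_le_log (by norm_num) (by linarith)

lemma log_ratio_le {p : ℝ} (hp : 1 < p) : log (p / (p - 1)) ≤ 1 / (p - 1) := by
  have := log_le_sub_one_of_pos (show 0 < p / (p - 1) from div_pos (by linarith) (by linarith))
  have e : p / (p - 1) - 1 = 1 / (p - 1) := by
    have : p - 1 ≠ 0 := by linarith
    field_simp
    ring
  linarith

lemma le_log_ratio {p : ℝ} (hp : 1 < p) : 1 / p ≤ log (p / (p - 1)) := by
  have h := one_sub_inv_le_log_of_pos (show 0 < p / (p - 1) from div_pos (by linarith) (by linarith))
  have e : 1 - (p / (p - 1))⁻¹ = 1 / p := by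
    have : p ≠ 0 := by linarith
    field_simp
    ring
  linarith

/-- Replacing the prime factors of `n` by the primes below `K`: each prime factor above `K` costs
at most `1 / (K - 1)`, and each prime below `K` that is not a factor gains at least as much. -/
lemma log_sigma_le {n K : ℕ} (hn : n ≠ 0) (hK : 2 ≤ K) :
    log ((sigmaFn n : ℝ) / n) ≤
      eulerLog K + (log (tauFn n) / log 2 - (Nat.primesBelow K).card) / (K - 1) := by
  have hK1 : (0 : ℝ) < (K : ℝ) - 1 := by
    have : (2 : ℝ) ≤ K := by exact_mod_cast hK
    linarith
  have h1 : log ((sigmaFn n : ℝ) / n) ≤ ∑ p ∈ n.primeFactors, log ((p : ℝ) / (p - 1)) := by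
    rw [log_sigma hn]
    refine Finset.sum_le_sum fun p hp => ?_
    have h2 := (Nat.prime_of_mem_primeFactors hp).two_le
    exact log_le_log (ab_pos h2 _) (ab_le h2 _)
  set A := n.primeFactors
  set B := Nat.primesBelow K
  have hA : ∑ p ∈ A \ B, log ((p : ℝ) / (p - 1)) ≤ (A \ B).card * (1 / ((K : ℝ) - 1)) := by
    rw [← nsmul_eq_mul]
    refine Finset.sum_le_card_nsmul _ _ _ fun p hp => ?_
    rw [Finset.mem_sdiff] at hp
    have hpp := Nat.prime_of_mem_primeFactors hp.1
    have hKp : K ≤ p := by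
      by_contra h
      exact hp.2 (Nat.mem_primesBelow.2 ⟨by omega, hpp⟩)
    have hKp' : (K : ℝ) ≤ p := by exact_mod_cast hKp
    refine (log_ratio_le (by linarith)).trans ?_
    exact one_div_le_one_div_of_le hK1 (by linarith)
  have hB : (B \ A).card * (1 / ((K : ℝ) - 1)) ≤ ∑ p ∈ B \ A, log ((p : ℝ) / (p - 1)) := by
    rw [← nsmul_eq_mul]
    refine Finset.card_nsmul_le_sum _ _ _ fun p hp => ?_
    rw [Finset.mem_sdiff] at hp
    obtain ⟨hpK, hpp⟩ := Nat.mem_primesBelow.1 hp.1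
    have hp2 : (2 : ℝ) ≤ p := by exact_mod_cast hpp.two_le
    have hKp' : (p : ℝ) ≤ K - 1 := by
      have : (p + 1 : ℝ) ≤ K := by exact_mod_cast hpK
      linarith
    refine le_trans ?_ (le_log_ratio (by linarith))
    exact one_div_le_one_div_of_le (by linarith) hKp'
  have eA := Finset.sum_inter_add_sum_sdiff A B fun p => log ((p : ℝ) / (p - 1))
  have eB := Finset.sum_inter_add_sum_sdiff B A fun p => log ((p : ℝ) / (p - 1))
  have cA := Finset.card_inter_add_card_sdiff A B
  have cB := Finset.card_inter_add_card_sdiff B A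
  rw [Finset.inter_comm B A] at eB cB
  have hc : ((A \ B).card : ℝ) - (B \ A).card = A.card - B.card := by
    rw [← cA, ← cB]; push_cast; ring
  have hω : (A.card : ℝ) ≤ log (tauFn n) / log 2 := by
    rw [le_div_iff₀ (log_pos one_lt_two)]
    exact omega_le hn
  have hfin : ((A.card : ℝ) - B.card) * (1 / ((K : ℝ) - 1)) ≤
      (log (tauFn n) / log 2 - B.card) / (K - 1) := by
    rw [mul_one_div]
    gcongr
  rw [← hc] at hfin
  unfold eulerLog
  nlinarith

/-- The certificate for the bound of `log_sigma_le` with `K = 2 ^ k` at `log τ(n) = T`. -/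
def eulerEnd (k c F : ℕ) (T : ℚ) : Bool :=
  decide (1 / 4 ≤ rhsLo T / (F / 10000)) &&
  decide ((T * (10000000000 / 6931471803) - c) / (2 ^ k - 1) ≤ logLo (rhsLo T / (F / 10000)))

lemma euler_window {k c F : ℕ} {T₁ T₂ : ℚ} (h : eulerCheck k c F = true) (hk : 1 ≤ k) (hF : 0 < F)
    (hT : 0 ≤ T₁) (hT₁ : eulerEnd k c F T₁ = true) (hT₂ : eulerEnd k c F T₂ = true)
    {n : ℕ} (hn : n ≠ 0) (hn₁ : (T₁ : ℝ) ≤ log (tauFn n)) (hn₂ : log (tauFn n) ≤ T₂) :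
    (sigmaFn n : ℝ) / n ≤ 2597 / 1000 * log (log (3 * tauFn n)) := by
  obtain ⟨hc, hE⟩ := eulerCheck_spec h
  have hK : 2 ≤ 2 ^ k := by
    calc 2 = 2 ^ 1 := rfl
      _ ≤ 2 ^ k := Nat.pow_le_pow_right (by norm_num) hk
  have hb := log_sigma_le hn hK
  rw [hc] at hb
  have hK1 : (0 : ℝ) < (2 : ℝ) ^ k - 1 := by
    have : (2 : ℝ) ≤ 2 ^ k := by exact_mod_cast hK
    linarith
  have hsig : (0 : ℝ) < (sigmaFn n : ℝ) / n := by
    rw [sigmaFn_eq hn]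
    exact Finset.prod_pos fun p hp => ab_pos (Nat.prime_of_mem_primeFactors hp).two_le _
  have htau : (0 : ℝ) < tauFn n := by exact_mod_cast tauFn_pos hn
  have hl2 := Real.log_two_gt_d9
  set α : ℝ := eulerLog (2 ^ k) - c / (2 ^ k - 1) with hα
  set μ : ℝ := 1 / (log 2 * (2 ^ k - 1)) with hμ
  have hlin : ∀ T : ℝ, α + μ * T = eulerLog (2 ^ k) + (T / log 2 - c) / (2 ^ k - 1) := by
    intro T
    have : log 2 ≠ 0 := by linarith
    rw [hα, hμ]
    field_simp
    ring
  have hend : ∀ T : ℚ, 0 ≤ T → eulerEnd k c F T = true →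
      exp (α + μ * T) ≤ 2597 / 1000 * log (T + log 3) := by
    intro T hT0 hc
    simp only [eulerEnd, Bool.and_eq_true, decide_eq_true_eq] at hc
    refine endpoint hT0 (by positivity) ?_ hc.1 hc.2
    rw [hlin, add_comm]
    refine add_le_add ?_ hE
    have hT0' : (0 : ℝ) ≤ T := by exact_mod_cast hT0
    have h1 : (T : ℝ) / log 2 ≤ T * (10000000000 / 6931471803) := by
      rw [div_le_iff₀ (by linarith)]
      nlinarith
    push_cast
    exact div_le_div_of_nonneg_right (by linarith) hK1.le
  have hT0 : (0 : ℝ) ≤ T₁ := by exact_mod_cast hT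
  have hT2 : 0 ≤ T₂ := by
    have : (T₁ : ℝ) ≤ T₂ := hn₁.trans hn₂
    exact hT.trans (by exact_mod_cast this)
  have hw := window hT0 hn₁ hn₂ (hend T₁ hT hT₁) (hend T₂ hT2 hT₂)
  rw [log_mul (by norm_num) htau.ne', add_comm (log 3)]
  refine le_trans ?_ hw
  rw [← log_le_iff_le_exp hsig, hlin]
  push_cast at hb
  exact hb

lemma euler₁₁ : eulerCheck 11 309 136142 = true := by decide +kernel

lemma euler₁₃ : eulerCheck 13 1028 160643 = true := by decide +kernel

lemma euler₁₅ : eulerCheck 15 3512 185253 = true := by decide +kernel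

lemma euler₁₇ : eulerCheck 17 12251 209921 = true := by decide +kernel

lemma euler_windows {n : ℕ} (hn : n ≠ 0) (h₁ : (194074 / 1000 : ℝ) ≤ log (tauFn n))
    (h₂ : log (tauFn n) ≤ 28000) :
    (sigmaFn n : ℝ) / n ≤ 2597 / 1000 * log (log (3 * tauFn n)) := by
  rcases le_total (log (tauFn n)) 400 with h | h
  · exact euler_window (T₁ := 194074 / 1000) (T₂ := 400) euler₁₁ (by norm_num) (by norm_num)
      (by norm_num) (by decide +kernel) (by decide +kernel) hn (by push_cast; linarith)
      (by push_cast; linarith)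
  rcases le_total (log (tauFn n)) 1500 with h' | h'
  · exact euler_window (T₁ := 400) (T₂ := 1500) euler₁₃ (by norm_num) (by norm_num)
      (by norm_num) (by decide +kernel) (by decide +kernel) hn (by push_cast; linarith)
      (by push_cast; linarith)
  rcases le_total (log (tauFn n)) 5000 with h'' | h''
  · exact euler_window (T₁ := 1500) (T₂ := 5000) euler₁₅ (by norm_num) (by norm_num)
      (by norm_num) (by decide +kernel) (by decide +kernel) hn (by push_cast; linarith)
      (by push_cast; linarith)
  exact euler_window (T₁ := 5000) (T₂ := 28000) euler₁₇ (by norm_num) (by norm_num)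
      (by norm_num) (by decide +kernel) (by decide +kernel) hn (by push_cast; linarith)
      (by push_cast; linarith)

/-! ### An upper bound of Mertens type -/

/-- `∑ log p / p` over the primes `p ≤ n`. -/
noncomputable def mertens (n : ℕ) : ℝ := ∑ p ∈ n.primesLE, log p / p

lemma sum_log_le {n : ℕ} (hn : 1 ≤ n) :
    ∑ k ∈ Finset.Ioc 0 n, log k ≤ n * log n - n + 1 + log n := by
  induction n, hn using Nat.le_induction with
  | base => simp
  | succ n hn ih =>
    rw [← Finset.insert_Ioc_right_eq_Ioc_add_one (by omega), Finset.sum_insert (by simp)]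
    have hn' : (1 : ℝ) ≤ n := by exact_mod_cast hn
    have h := one_sub_inv_le_log_of_pos (show (0 : ℝ) < (n + 1) / n by positivity)
    rw [log_div (by positivity) (by positivity)] at h
    have e : 1 - (((n : ℝ) + 1) / n)⁻¹ = 1 / (n + 1) := by field_simp; ring
    rw [e, div_le_iff₀ (by positivity)] at h
    push_cast
    nlinarith

lemma sum_vonMangoldt (n : ℕ) :
    ∑ d ∈ Finset.Ioc 0 n, ArithmeticFunction.vonMangoldt d * ((n / d : ℕ) : ℝ) =
      ∑ k ∈ Finset.Ioc 0 n, log k := by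
  have h := ArithmeticFunction.sum_Ioc_mul_zeta_eq_sum ArithmeticFunction.vonMangoldt n
  rw [← h]
  refine Finset.sum_congr rfl fun k _ => ?_
  rw [ArithmeticFunction.vonMangoldt_mul_zeta, ArithmeticFunction.log_apply]

/-- Some proper prime powers; keeping them in the sum for `log n!` improves the constant in
`mertens_le`. -/
def properPowers : Finset ℕ := {4, 8, 16, 32, 64, 9, 27, 81, 25, 125, 49}

lemma sum_properPowers (x : ℝ) :
    ∑ d ∈ properPowers, ArithmeticFunction.vonMangoldt d * (x / d - 1) =
      log 2 * (31 / 64 * x - 5) + log 3 * (13 / 81 * x - 3) + log 5 * (6 / 125 * x - 2) +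
        log 7 * (1 / 49 * x - 1) := by
  have key : ∀ p k : ℕ, p.Prime → k ≠ 0 → ArithmeticFunction.vonMangoldt (p ^ k) = log p :=
    fun p k hp hk => by
      rw [ArithmeticFunction.vonMangoldt_apply_pow hk, ArithmeticFunction.vonMangoldt_apply_prime hp]
  have h4 := key 2 2 (by norm_num) (by norm_num)
  have h8 := key 2 3 (by norm_num) (by norm_num)
  have h16 := key 2 4 (by norm_num) (by norm_num)
  have h32 := key 2 5 (by norm_num) (by norm_num)
  have h64 := key 2 6 (by norm_num) (by norm_num)
  have h9 := key 3 2 (by norm_num) (by norm_num)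
  have h27 := key 3 3 (by norm_num) (by norm_num)
  have h81 := key 3 4 (by norm_num) (by norm_num)
  have h25 := key 5 2 (by norm_num) (by norm_num)
  have h125 := key 5 3 (by norm_num) (by norm_num)
  have h49 := key 7 2 (by norm_num) (by norm_num)
  norm_num at h4 h8 h16 h32 h64 h9 h27 h81 h25 h125 h49
  unfold properPowers
  repeat rw [Finset.sum_insert (by decide)]
  rw [Finset.sum_singleton, h4, h8, h16, h32, h64, h9, h27, h81, h25, h125, h49]
  push_cast
  ring

lemma log_five_gt : (16 / 10 : ℝ) ≤ log 5 := by
  have h := logLo_le (q := 5) (by norm_num)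
  have h2 : (16 / 10 : ℚ) ≤ logLo 5 := by decide +kernel
  have h3 : (((16 / 10 : ℚ)) : ℝ) ≤ logLo 5 := Rat.cast_le.mpr h2
  push_cast at h h3
  linarith

lemma log_seven_gt : (194 / 100 : ℝ) ≤ log 7 := by
  have h := logLo_le (q := 7) (by norm_num)
  have h2 : (194 / 100 : ℚ) ≤ logLo 7 := by decide +kernel
  have h3 : (((194 / 100 : ℚ)) : ℝ) ≤ logLo 7 := Rat.cast_le.mpr h2
  push_cast at h h3
  linarith

lemma log_pow_seventeen : log ((2 : ℝ) ^ 17) = 17 * log 2 := by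
  rw [log_pow]; norm_num

/-- Comparison of `log n! = ∑ Λ(d) ⌊n / d⌋` with Stirling's bound and `θ(n) ≤ n log 4`. -/
lemma mertens_le {n : ℕ} (hn : 2 ^ 17 ≤ n) : mertens n ≤ log n - 241 / 1000 := by
  have hn' : (2 : ℝ) ^ 17 ≤ n := by exact_mod_cast hn
  have hn0 : (0 : ℝ) < n := lt_of_lt_of_le (by norm_num) hn'
  have hdis : Disjoint n.primesLE properPowers := by
    rw [Finset.disjoint_left]
    intro p hp hq
    have hpp := (Nat.mem_primesLE.1 hp).2
    simp only [properPowers, Finset.mem_insert, Finset.mem_singleton] at hq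
    rcases hq with rfl | rfl | rfl | rfl | rfl | rfl | rfl | rfl | rfl | rfl | rfl <;>
      norm_num at hpp
  have hsub : n.primesLE.disjUnion properPowers hdis ⊆ Finset.Ioc 0 n := by
    intro d hd
    rw [Finset.mem_disjUnion] at hd
    rw [Finset.mem_Ioc]
    rcases hd with hd | hd
    · exact ⟨(Nat.mem_primesLE.1 hd).2.pos, (Nat.mem_primesLE.1 hd).1⟩
    · simp only [properPowers, Finset.mem_insert, Finset.mem_singleton] at hd
      constructor <;> omega
  have h1 : ∑ d ∈ n.primesLE.disjUnion properPowers hdis,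
      ArithmeticFunction.vonMangoldt d * ((n : ℝ) / d - 1) ≤ n * log n - n + 1 + log n := by
    refine le_trans ?_ (sum_log_le (show 1 ≤ n by omega))
    rw [← sum_vonMangoldt]
    refine le_trans (Finset.sum_le_sum fun d hd => ?_)
      (Finset.sum_le_sum_of_subset_of_nonneg hsub fun d _ _ =>
        mul_nonneg ArithmeticFunction.vonMangoldt_nonneg (Nat.cast_nonneg _))
    refine mul_le_mul_of_nonneg_left ?_ ArithmeticFunction.vonMangoldt_nonneg
    rw [← Nat.floor_div_eq_div (K := ℝ)]
    exact (Nat.sub_one_lt_floor _).le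
  rw [Finset.sum_disjUnion, sum_properPowers] at h1
  have h2 : ∑ d ∈ n.primesLE, ArithmeticFunction.vonMangoldt d * ((n : ℝ) / d - 1) =
      n * mertens n - Chebyshev.theta n := by
    rw [Chebyshev.theta_eq_sum_primesLE_log, mertens, Finset.mul_sum, ← Finset.sum_sub_distrib]
    refine Finset.sum_congr rfl fun p hp => ?_
    rw [ArithmeticFunction.vonMangoldt_apply_prime (Nat.mem_primesLE.1 hp).2]
    ring
  rw [h2] at h1
  have h3 := Chebyshev.theta_le_log4_mul_x hn0.le
  have h4 : log 4 = 2 * log 2 := by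
    rw [show (4 : ℝ) = 2 ^ 2 by norm_num, log_pow]; norm_num
  rw [h4] at h3
  have hl2 := Real.log_two_gt_d9
  have hl2' := Real.log_two_lt_d9
  have hl3 := log_three_gt
  have hl5 := log_five_gt
  have hl7 := log_seven_gt
  have hlog : log n ≤ (n : ℝ) / 2 ^ 17 - 1 + 17 * log 2 := by
    have := log_le_sub_one_of_pos (show 0 < (n : ℝ) / 2 ^ 17 by positivity)
    rw [log_div hn0.ne' (by norm_num), log_pow_seventeen] at this
    linarith
  have h5 : n * mertens n ≤ n * (log n - 241 / 1000) := by
    have e3 := mul_le_mul_of_nonneg_right hl3 (show (0 : ℝ) ≤ 13 / 81 * n - 3 by linarith)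
    have e5 := mul_le_mul_of_nonneg_right hl5 (show (0 : ℝ) ≤ 6 / 125 * n - 2 by linarith)
    have e7 := mul_le_mul_of_nonneg_right hl7 (show (0 : ℝ) ≤ 1 / 49 * n - 1 by linarith)
    have e2 := mul_le_mul_of_nonneg_right hl2'.le (show (0 : ℝ) ≤ (2 - 31 / 64) * n + 5 by linarith)
    linarith
  exact le_of_mul_le_mul_left h5 hn0

/-- `10 ^ 9` times a lower bound for `log n / n` when `2 ^ m ≤ n`, from
`log (n / 2 ^ m) ≥ 2 (n - 2 ^ m) / (n + 2 ^ m)`. -/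
def mertensTerm (m n : ℕ) : ℕ :=
  Nat.add (Nat.div (Nat.mul m 693147180) n)
    (Nat.div (Nat.mul 2000000000 (Nat.sub n (Nat.pow 2 m))) (Nat.mul (Nat.add n (Nat.pow 2 m)) n))

/-- The sum of `mertensTerm` over the primes below `2 ^ k`, taken over one binary scale at a
time. -/
noncomputable def mertensSum (k : ℕ) : ℕ :=
  Nat.rec 0 (fun m s => Nat.add s
    (treeSum (fun n => cond (isp n) (mertensTerm m n) 0) m (Nat.pow 2 m))) k

lemma mertens_check : Nat.ble 10439906083 (mertensSum 17) = true := by decide +kernel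

lemma mertensTerm_le {m p : ℕ} (h : 2 ^ m ≤ p) :
    (mertensTerm m p : ℝ) ≤ 1000000000 * (log p / p) := by
  have hc : (0 : ℝ) < 2 ^ m := by positivity
  have h' : (2 : ℝ) ^ m ≤ p := by exact_mod_cast h
  have hp0 : (0 : ℝ) < p := by linarith
  have e : mertensTerm m p =
      (m * 693147180) / p + (2000000000 * (p - 2 ^ m)) / ((p + 2 ^ m) * p) := rfl
  have h1 : (((m * 693147180) / p : ℕ) : ℝ) ≤ ((m * 693147180 : ℕ) : ℝ) / p := Nat.cast_div_le
  have h2 : (((2000000000 * (p - 2 ^ m)) / ((p + 2 ^ m) * p) : ℕ) : ℝ) ≤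
      ((2000000000 * (p - 2 ^ m) : ℕ) : ℝ) / (((p + 2 ^ m) * p : ℕ) : ℝ) := Nat.cast_div_le
  push_cast [Nat.cast_sub h] at h1 h2
  have h3 := le_log_one_add_of_nonneg (x := (p - 2 ^ m) / 2 ^ m) (div_nonneg (by linarith) hc.le)
  have e1 : 1 + ((p : ℝ) - 2 ^ m) / 2 ^ m = p / 2 ^ m := by field_simp; ring
  have e2 : 2 * (((p : ℝ) - 2 ^ m) / 2 ^ m) / ((p - 2 ^ m) / 2 ^ m + 2) =
      2 * (p - 2 ^ m) / (p + 2 ^ m) := by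
    have : ((p : ℝ) - 2 ^ m) / 2 ^ m + 2 = (p + 2 ^ m) / 2 ^ m := by field_simp; ring
    rw [this]
    field_simp
  rw [e1, e2, log_div hp0.ne' hc.ne', log_pow] at h3
  have h4 : (2000000000 * ((p : ℝ) - 2 ^ m)) / ((p + 2 ^ m) * p) =
      1000000000 * (2 * (p - 2 ^ m) / (p + 2 ^ m)) / p := by
    field_simp
    ring
  have hm : (0 : ℝ) ≤ m := Nat.cast_nonneg _
  have hl2 := Real.log_two_gt_d9
  rw [e]
  push_cast
  refine (add_le_add h1 h2).trans ?_
  have e3 : 1000000000 * (log (p : ℝ) / p) * p = 1000000000 * log p := by field_simp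
  rw [h4, ← add_div, div_le_iff₀ hp0, e3]
  nlinarith

lemma mertensSum_le {k : ℕ} (hk : k ≤ 17) :
    (mertensSum k : ℝ) ≤ 1000000000 * ∑ p ∈ Nat.primesBelow (2 ^ k), log p / p := by
  induction k with
  | zero =>
    have : mertensSum 0 = 0 := rfl
    rw [this, Nat.cast_zero]
    exact mul_nonneg (by norm_num) (Finset.sum_nonneg fun p _ => by positivity)
  | succ k ih =>
    have e : mertensSum (k + 1) = mertensSum k +
        treeSum (fun n => cond (isp n) (mertensTerm k n) 0) k (2 ^ k) := rfl
    have e2 : 2 ^ k + 2 ^ k = 2 ^ (k + 1) := by ring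
    have h1 : ∑ p ∈ Nat.primesBelow (2 ^ (k + 1)), log (p : ℝ) / p =
        ∑ p ∈ Nat.primesBelow (2 ^ k), log (p : ℝ) / p +
        ∑ n ∈ Finset.Ico (2 ^ k) (2 ^ (k + 1)), if Nat.Prime n then log (n : ℝ) / n else 0 := by
      rw [Nat.primesBelow, Nat.primesBelow, Finset.sum_filter, Finset.sum_filter,
        Finset.sum_range_add_sum_Ico _ (Nat.pow_le_pow_right two_pos (Nat.le_succ k))]
    rw [e, h1, mul_add, treeSum_eq, e2]
    push_cast
    refine add_le_add (ih (by omega)) ?_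
    rw [Finset.mul_sum]
    refine Finset.sum_le_sum fun n hn => ?_
    rw [Finset.mem_Ico] at hn
    have := isp_iff (hn.2.trans_le (Nat.pow_le_pow_right (by norm_num) hk))
    by_cases hp : n.Prime
    · rw [this.2 hp, cond_true, if_pos hp]
      exact mertensTerm_le hn.1
    · rw [Bool.eq_false_iff.2 (mt this.1 hp), cond_false, if_neg hp]
      simp

lemma primesLE_start : Nat.primesLE (2 ^ 17) = Nat.primesBelow (2 ^ 17) := by
  rw [Nat.primesLE, Nat.primesBelow_succ, if_neg (by norm_num)]

lemma mertens_start : 17 * log 2 - 1344 / 1000 ≤ mertens (2 ^ 17) := by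
  have h := mertens_check
  rw [Nat.ble_eq] at h
  have h' : (10439906083 : ℝ) ≤ mertensSum 17 := by exact_mod_cast h
  have h2 := mertensSum_le (le_refl 17)
  have hl2' := Real.log_two_lt_d9
  rw [mertens, primesLE_start]
  linarith

lemma eulerLog_succ (n : ℕ) : eulerLog (n + 1) =
    eulerLog n + if n.Prime then log ((n : ℝ) / (n - 1)) else 0 := by
  unfold eulerLog
  rw [Nat.primesBelow_succ]
  split_ifs with h
  · rw [Finset.sum_insert (by simp [Nat.mem_primesBelow])]; ring
  · simp

lemma mertens_succ (n : ℕ) : mertens (n + 1) =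
    mertens n + if (n + 1).Prime then log ((n + 1 : ℕ) : ℝ) / ((n + 1 : ℕ) : ℝ) else 0 := by
  unfold mertens
  rw [Nat.primesLE, Nat.primesBelow_succ, ← Nat.primesLE]
  split_ifs with h
  · rw [Finset.sum_insert (by simp [Nat.mem_primesLE])]; ring
  · simp

/-- Partial summation in the form of a quantity that decreases for `n ≥ 2 ^ 17`. -/
noncomputable def abelDefect (n : ℕ) : ℝ :=
  eulerLog (n + 1) + (log n - 241 / 1000 - mertens n) / log n - log (log n) + 1 / n

lemma abelDefect_succ {n : ℕ} (hn : 2 ^ 17 ≤ n) : abelDefect (n + 1) ≤ abelDefect n := by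
  have hm := mertens_le hn
  have hn' : (2 : ℝ) ^ 17 ≤ n := by exact_mod_cast hn
  have hn0 : (0 : ℝ) < n := lt_of_lt_of_le (by norm_num) hn'
  set l := log n with hl
  set l' := log ((n : ℝ) + 1) with hl'
  have hl0 : 0 < l := log_pos (by linarith)
  have hll : l ≤ l' := log_le_log hn0 (by linarith)
  have hl0' : 0 < l' := by linarith
  have h1 := one_sub_inv_le_log_of_pos (div_pos hl0' hl0)
  rw [log_div hl0'.ne' hl0.ne', inv_div] at h1
  have h2 : (mertens n + 241 / 1000) * (1 / l - 1 / l') ≤ 1 - l / l' := by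
    have : l * (1 / l - 1 / l') = 1 - l / l' := by field_simp
    rw [← this]
    refine mul_le_mul_of_nonneg_right (by linarith) ?_
    rw [sub_nonneg]
    exact one_div_le_one_div_of_le hl0 hll
  have h3 : (l - 241 / 1000 - mertens n) / l = 1 - (mertens n + 241 / 1000) * (1 / l) := by
    field_simp; ring
  unfold abelDefect
  rw [eulerLog_succ (n + 1), mertens_succ]
  push_cast
  rw [← hl, ← hl', h3]
  have hq : (n : ℝ) + 1 - 1 = n := by ring
  split_ifs with hp
  · have h4 : (l' - 241 / 1000 - (mertens n + l' / (n + 1))) / l' =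
        1 - (mertens n + 241 / 1000) * (1 / l') - 1 / (n + 1) := by
      field_simp; ring
    have h5 := log_ratio_le (show 1 < (n : ℝ) + 1 by linarith)
    rw [hq] at h5
    rw [h4, hq]
    linarith
  · have h4 : (l' - 241 / 1000 - (mertens n + 0)) / l' =
        1 - (mertens n + 241 / 1000) * (1 / l') := by
      field_simp; ring
    have h5 : 1 / ((n : ℝ) + 1) ≤ 1 / n := one_div_le_one_div_of_le hn0 (by linarith)
    rw [h4]
    linarith

/-- An explicit form of Mertens' third theorem; the true constant is `exp γ = 1.781…`. -/
lemma eulerLog_le {n : ℕ} (hn : 2 ^ 17 ≤ n) : eulerLog (n + 1) ≤ log (196 / 100 * log n) := by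
  have hD : abelDefect n ≤ abelDefect (2 ^ 17) := by
    induction n, hn using Nat.le_induction with
    | base => exact le_rfl
    | succ n hn ih => exact (abelDefect_succ hn).trans ih
  have hm := mertens_le hn
  have hn' : (2 : ℝ) ^ 17 ≤ n := by exact_mod_cast hn
  have hn0 : (0 : ℝ) < n := lt_of_lt_of_le (by norm_num) hn'
  have hl0 : 0 < log n := log_pos (by linarith)
  have hl2 := Real.log_two_gt_d9
  have hl2' := Real.log_two_lt_d9
  have h1 : eulerLog (n + 1) - log (log n) ≤ abelDefect n := by
    have h2 : 0 ≤ (log n - 241 / 1000 - mertens n) / log n := div_nonneg (by linarith) hl0.le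
    have h3 : 0 ≤ 1 / (n : ℝ) := by positivity
    unfold abelDefect
    linarith
  have h4 : abelDefect (2 ^ 17) ≤ log (196 / 100) := by
    have hE : eulerLog (2 ^ 17 + 1) ≤ log (209921 / 10000) := by
      have h5 := (eulerCheck_spec euler₁₇).2
      have h6 : eulerLog (2 ^ 17 + 1) = eulerLog (2 ^ 17) := by
        rw [eulerLog, eulerLog, ← primesLE_start]; rfl
      rw [h6]
      push_cast at h5
      exact h5
    have hms := mertens_start
    have e17 : ((2 ^ 17 : ℕ) : ℝ) = 2 ^ 17 := by norm_num
    rw [abelDefect, e17, log_pow_seventeen]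
    have hd : (17 * log 2 - 241 / 1000 - mertens (2 ^ 17)) / (17 * log 2) ≤ 937 / 10000 := by
      rw [div_le_iff₀ (by linarith)]
      linarith
    have hll : log (117835 / 10000) ≤ log (17 * log 2) := log_le_log (by norm_num) (by linarith)
    have hr : log (209921 / 10000) - log (117835 / 10000) - log (196 / 100) ≤ - (95 / 1000) := by
      have h := logLo_le (q := 23095660 / 20992100) (by norm_num)
      have h2 : (95 / 1000 : ℚ) ≤ logLo (23095660 / 20992100) := by decide +kernel
      have h3 : (((95 / 1000 : ℚ)) : ℝ) ≤ logLo (23095660 / 20992100) := Rat.cast_le.mpr h2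
      have h4 : ((23095660 / 20992100 : ℚ) : ℝ) =
          (209921 / 10000 / (117835 / 10000) / (196 / 100))⁻¹ := by norm_num
      rw [h4, log_inv] at h
      rw [← log_div (by norm_num) (by norm_num), ← log_div (by norm_num) (by norm_num)]
      push_cast at h3
      linarith
    have hx : 1 / (2 : ℝ) ^ 17 ≤ 1 / 1000 := by norm_num
    linarith
  rw [log_mul (by norm_num) hl0.ne']
  linarith [hD.trans h4]

/-! ### Numbers with very many prime factors -/

lemma log_mono_bound {a : ℝ} {q b : ℚ} (hq : 1 / 4 ≤ q) (hqa : (q : ℝ) ≤ a) (hb : b ≤ logLo q) :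
    (b : ℝ) ≤ log a := by
  have h0 : (0 : ℝ) < q := by exact_mod_cast (show (0 : ℚ) < q by linarith)
  exact (Rat.cast_le.mpr hb).trans ((logLo_le hq).trans (log_le_log h0 hqa))

lemma loglog_two : -(367 / 1000 : ℝ) ≤ log (log 2) := by
  have := log_mono_bound (a := log 2) (q := 6931471803 / 10000000000) (b := -(367 / 1000))
    (by norm_num) (by push_cast; linarith [Real.log_two_gt_d9]) (by decide +kernel)
  push_cast at this
  exact this

/-- The least `y ≥ 2 ^ 17` with `y / log y ≥ κ`. -/
lemma exists_cutoff {κ : ℝ} (hκ : 40395 ≤ κ) : ∃ y : ℕ, 2 ^ 17 + 1 ≤ y ∧ κ * log y ≤ y ∧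
    (y - 1 : ℝ) ≤ κ * log (y - 1) := by
  classical
  have hκ0 : 0 < κ := by linarith
  have hex : ∃ y : ℕ, 2 ^ 17 ≤ y ∧ κ * log y ≤ y := by
    have h1 := (Real.isLittleO_log_id_atTop.bound (inv_pos.2 hκ0)).and
      (Filter.eventually_ge_atTop ((2 : ℝ) ^ 17))
    obtain ⟨y, hy⟩ := (tendsto_natCast_atTop_atTop.eventually h1).exists
    refine ⟨y, by exact_mod_cast hy.2, ?_⟩
    have h2 := hy.1
    have hy0 : (0 : ℝ) < y := lt_of_lt_of_le (by norm_num) hy.2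
    rw [id, Real.norm_of_nonneg hy0.le, inv_mul_eq_div, le_div_iff₀ hκ0] at h2
    have h3 := le_norm_self (log (y : ℝ))
    nlinarith
  obtain ⟨h1, h2⟩ := Nat.find_spec hex
  set y := Nat.find hex with hy
  have hne : y ≠ 2 ^ 17 := by
    intro h
    have e17 : ((2 ^ 17 : ℕ) : ℝ) = 2 ^ 17 := by norm_num
    rw [h, e17, log_pow_seventeen] at h2
    have hl2 := Real.log_two_gt_d9
    nlinarith
  refine ⟨y, by omega, h2, ?_⟩
  by_contra hcon
  have h3 : ((y - 1 : ℕ) : ℝ) = y - 1 := by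
    rw [Nat.cast_sub (by omega)]; norm_num
  refine Nat.find_min hex (show y - 1 < y by omega) ⟨by omega, ?_⟩
  rw [h3]
  linarith

/-- With the cutoff `y` of `exists_cutoff` and `Y = log y`, Chebyshev's lower bound for `π(y)` gives
`σ(n) / n ≤ 1.96 Y exp (0.31 / Y) ≤ 1.96 (Y + 0.32)`, whereas
`log log τ(n) ≥ Y - log Y + log log 2`, up to a negligible error. -/
lemma tail_bound {n : ℕ} (hn : n ≠ 0) (h : 28000 ≤ log (tauFn n)) :
    (sigmaFn n : ℝ) / n ≤ 2597 / 1000 * log (log (3 * tauFn n)) := by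
  have hl2 := Real.log_two_gt_d9
  have hl2' := Real.log_two_lt_d9
  have hl20 : 0 < log 2 := by linarith
  set κ := log (tauFn n) / log 2 with hκd
  have hκ : 40395 ≤ κ := by
    rw [hκd, le_div_iff₀ hl20]
    linarith
  have hκ0 : 0 < κ := by linarith
  have hT : log (tauFn n) = κ * log 2 := by rw [hκd]; field_simp
  obtain ⟨y, hy1, hy2, hy3⟩ := exists_cutoff hκ
  have hy17 : (2 : ℝ) ^ 17 + 1 ≤ y := by exact_mod_cast hy1
  have hy0 : (0 : ℝ) < y := lt_of_lt_of_le (by norm_num) hy17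
  set Y := log (y : ℝ) with hY
  -- Bootstrapping with `y ≥ κ log y` raises `y > 2 ^ 17` to `log y ≥ 13.1`.
  have hY1 : (11 : ℝ) ≤ Y := by
    have := log_mono_bound (a := y) (q := 2 ^ 17) (b := 11) (by norm_num)
      (by push_cast; linarith) (by decide +kernel)
    push_cast at this
    exact this
  have hY2 : (13 : ℝ) ≤ Y := by
    have := log_mono_bound (a := y) (q := 444000) (b := 13) (by norm_num)
      (by push_cast; nlinarith) (by decide +kernel)
    push_cast at this
    exact this
  have hY3 : (131 / 10 : ℝ) ≤ Y := by
    have := log_mono_bound (a := y) (q := 525000) (b := 131 / 10) (by norm_num)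
      (by push_cast; nlinarith) (by decide +kernel)
    push_cast at this
    exact this
  have hY0 : 0 < Y := by linarith
  have hyY : 525000 ≤ (y : ℝ) := by nlinarith
  -- The upper bound for `σ(n) / n`.
  have hsig0 : (0 : ℝ) < (sigmaFn n : ℝ) / n := by
    rw [sigmaFn_eq hn]
    exact Finset.prod_pos fun p hp => ab_pos (Nat.prime_of_mem_primeFactors hp).two_le _
  have hsig : log ((sigmaFn n : ℝ) / n) ≤ log (196 / 100 * Y) + (31 / 100) / Y := by
    have h1 := log_sigma_le hn (show 2 ≤ y + 1 by omega)
    have h2 := eulerLog_le (show 2 ^ 17 ≤ y by omega)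
    have h3 := Chebyshev.pi_ge y
    rw [← Nat.primesLE_card_eq_primeCounting, Nat.primesLE, ← hY] at h3
    rw [div_le_iff₀ hY0] at h3
    have h4 : log ((y : ℝ) + 1) ≤ y / 1000 := by
      have h5 := log_le_sub_one_of_pos (show 0 < ((y : ℝ) + 1) / 2 ^ 17 by positivity)
      rw [log_div (by positivity) (by norm_num), log_pow_seventeen] at h5
      linarith
    have h6 : (κ - ((y + 1).primesBelow.card : ℝ)) / (((y + 1 : ℕ) : ℝ) - 1) ≤ (31 / 100) / Y := by
      push_cast
      rw [add_sub_cancel_right, div_le_div_iff₀ hy0 hY0]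
      nlinarith
    linarith
  have hup : (sigmaFn n : ℝ) / n ≤ 196 / 100 * (Y + 32 / 100) := by
    have h1 : (sigmaFn n : ℝ) / n ≤ 196 / 100 * Y * exp ((31 / 100) / Y) := by
      rw [← exp_log hsig0, ← exp_log (show 0 < 196 / 100 * Y by positivity), ← exp_add]
      exact exp_le_exp.2 hsig
    have h2 : Y * exp ((31 / 100) / Y) ≤ Y + 32 / 100 := by
      have h3 := one_sub_le_exp_neg ((31 / 100) / Y)
      rw [exp_neg] at h3
      have h4 := exp_pos ((31 / 100) / Y)
      set e := exp ((31 / 100) / Y)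
      have h5 : e * (1 - (31 / 100) / Y) ≤ 1 := by
        calc e * (1 - (31 / 100) / Y) ≤ e * e⁻¹ := mul_le_mul_of_nonneg_left h3 h4.le
          _ = 1 := mul_inv_cancel₀ h4.ne'
      have h6 : e * (Y - 31 / 100) ≤ Y := by
        have : e * (Y - 31 / 100) = e * (1 - (31 / 100) / Y) * Y := by field_simp
        rw [this]
        nlinarith
      have h7 : e ≤ Y / (Y - 31 / 100) := by
        rwa [le_div_iff₀ (by linarith)]
      calc Y * e ≤ Y * (Y / (Y - 31 / 100)) := mul_le_mul_of_nonneg_left h7 hY0.le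
        _ ≤ Y + 32 / 100 := by
          rw [← mul_div_assoc, div_le_iff₀ (by linarith)]
          nlinarith
    nlinarith
  -- The lower bound for `log log (3 τ(n))`.
  have hlow : Y - log Y - 368 / 1000 ≤ log (log (3 * tauFn n)) := by
    have htau : (0 : ℝ) < tauFn n := by exact_mod_cast tauFn_pos hn
    have h1 : log (tauFn n) ≤ log (3 * tauFn n) := log_le_log htau (by linarith)
    have h2 := log_le_log (by linarith) h1
    rw [hT, log_mul hκ0.ne' hl20.ne'] at h2
    have h3 : log ((y : ℝ) - 1) ≤ Y := log_le_log (by linarith) (by linarith)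
    have h4 : (y : ℝ) - 1 ≤ κ * Y := hy3.trans (mul_le_mul_of_nonneg_left h3 hκ0.le)
    have h5 := log_le_log (by linarith) h4
    rw [log_mul hκ0.ne' hY0.ne'] at h5
    have h6 : Y - log ((y : ℝ) - 1) ≤ 1 / 1000 := by
      have h7 := log_le_sub_one_of_pos (show 0 < (y : ℝ) / (y - 1) from
        div_pos hy0 (by linarith))
      rw [log_div hy0.ne' (by linarith), ← hY] at h7
      have h8 : (y : ℝ) / (y - 1) - 1 = 1 / (y - 1) := by
        have : (y : ℝ) - 1 ≠ 0 := by linarith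
        field_simp
        ring
      have h9 : 1 / ((y : ℝ) - 1) ≤ 1 / 1000 :=
        one_div_le_one_div_of_le (by norm_num) (by linarith)
      linarith
    have := loglog_two
    linarith
  -- Concavity: the tangent of `log` at `13.1` bounds `log Y`.
  have hlogY : log Y ≤ 2573 / 1000 + (Y / (131 / 10) - 1) := by
    have h1 := log_le_sub_one_of_pos (show 0 < Y / (131 / 10) by positivity)
    rw [log_div hY0.ne' (by norm_num)] at h1
    have h2 := le_logHi (q := 131 / 10) (by norm_num)
    have h3 : logHi (131 / 10) ≤ 2573 / 1000 := by decide +kernel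
    have h4 : ((logHi (131 / 10) : ℚ) : ℝ) ≤ ((2573 / 1000 : ℚ) : ℝ) := Rat.cast_le.mpr h3
    push_cast at h2 h4
    linarith
  linarith

/-! ### Counting the exceptions -/

lemma log_tau_ge {n : ℕ} (hn : 2 ≤ n) : (690 / 1000 : ℝ) ≤ log (tauFn n) := by
  have h1 : 2 ≤ tauFn n := by
    have : ({1, n} : Finset ℕ) ⊆ n.divisors := by
      intro d hd
      rw [Finset.mem_insert, Finset.mem_singleton] at hd
      rcases hd with rfl | rfl <;> simp <;> omega
    have h2 := Finset.card_le_card this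
    rwa [Finset.card_pair (by omega)] at h2
  have h2 : log 2 ≤ log (tauFn n) := log_le_log (by norm_num) (by exact_mod_cast h1)
  linarith [Real.log_two_gt_d9]

lemma mem_exc_of_lt {n : ℕ} (hn : 2 ≤ n)
    (h : 2597 / 1000 * log (log (3 * tauFn n)) < (sigmaFn n : ℝ) / n) : n ∈ exc.map ofFact := by
  have hn0 : n ≠ 0 := by omega
  have h0 := log_tau_ge hn
  rcases le_total (log (tauFn n)) (24918 / 1000) with h1 | h1
  · exact absurd (plain_low hn0 h0 h1) (not_le.2 h)
  rcases le_total (log (tauFn n)) (29321 / 1000) with h2 | h2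
  · exact (exc_window hn0 h1 h2).resolve_left (not_le.2 h)
  rcases le_total (log (tauFn n)) (194074 / 1000) with h3 | h3
  · exact absurd (plain_high hn0 h2 h3) (not_le.2 h)
  rcases le_total (log (tauFn n)) 28000 with h4 | h4
  · exact absurd (euler_windows hn0 h3 h4) (not_le.2 h)
  · exact absurd (tail_bound hn0 h4) (not_le.2 h)

/-- The set of integers `n ≥ 2` with `σ(n)/n > (2597/1000)·log(log(3·τ(n)))` has exactly
12 elements. -/
theorem stmt_5 :
    {n : ℕ | 2 ≤ n ∧
      (2597 / 1000 : ℝ) * Real.log (Real.log (3 * (tauFn n : ℝ))) <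
        (sigmaFn n : ℝ) / (n : ℝ)}.ncard = 12 := by
  have h : {n : ℕ | 2 ≤ n ∧
      (2597 / 1000 : ℝ) * Real.log (Real.log (3 * (tauFn n : ℝ))) <
        (sigmaFn n : ℝ) / (n : ℝ)} = ((exc.map ofFact).toFinset : Set ℕ) := by
    ext n
    rw [Finset.mem_coe, List.mem_toFinset]
    exact ⟨fun hn => mem_exc_of_lt hn.1 hn.2, fun hn => exc_mem hn⟩
  rw [h, Set.ncard_coe_finset, List.toFinset_card_of_nodup exc_nodup, List.length_map]
  rfl
end

section
/- Let ℓ ≥ 1 and let n be an integer with n > N_ℓ. Then φ(n) > φ(N_ℓ) = ∏_{p prime, p ≤ p_ℓ} (p−1). -/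
/-!
The argument compares `n` with the primorial through the number `k` of distinct prime factors of
`n`. Listing these in increasing order, the `i`-th one is at least the `i`-th prime, so for every
nonnegative function `f` that is monotone on the primes, the product of `f` over the first `k`
primes is at most its product over the prime factors of `n` (`prod_nth_le_prod`). Below, `pᵢ` is
the prime of zero-based index `i`, so that `p₀ = 2`.

* If `k ≤ l`, apply this to `f p = 1 - 1/p`: then
  `φ(n) = n ∏_{p ∣ n} (1 - 1/p) ≥ n ∏_{i < l} (1 - 1/pᵢ) > N_l ∏_{i < l} (1 - 1/pᵢ) = φ(N_l)`.
* If `k > l`, apply it to `f p = p - 1`: then `φ(n) ≥ ∏_{p ∣ n} (p - 1) ≥ ∏_{i < k} (pᵢ - 1)`,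
  which exceeds `∏_{i < l} (pᵢ - 1) = φ(N_l)` because the extra factors are at least `2`.
-/

open Real

/-- `Nk k` is the product of the first `k` primes (the `k`-th primorial). -/
noncomputable def Nk (k : ℕ) : ℕ := ∏ i ∈ Finset.range k, Nat.nth Nat.Prime i

/-- The first `k` primes minimise the product of a nonnegative monotone function among all sets
of `k` primes. -/
lemma prod_nth_le_prod (f : ℕ → ℚ) (hf0 : ∀ p, p.Prime → 0 ≤ f p)
    (hf : ∀ p q, p.Prime → q.Prime → p ≤ q → f p ≤ f q) (S : Finset ℕ)
    (hS : ∀ p ∈ S, p.Prime) :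
    ∏ i ∈ Finset.range S.card, f (Nat.nth Nat.Prime i) ≤ ∏ p ∈ S, f p := by
  induction S using Finset.induction_on_max with
  | empty => simp
  | insert a s ha ih =>
    have has : a ∉ s := fun h => lt_irrefl _ (ha a h)
    have hap : a.Prime := hS a (Finset.mem_insert_self _ _)
    have hs : ∀ p ∈ s, p.Prime := fun p hp => hS p (Finset.mem_insert_of_mem hp)
    rw [Finset.card_insert_of_notMem has, Finset.prod_insert has, Finset.prod_range_succ,
      mul_comm (f a)]
    -- All elements of `s` are primes below `a`, so `a` has index at least `s.card`.
    have hcard : s.card ≤ Nat.count Nat.Prime a := by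
      rw [Nat.count_eq_card_filter_range]
      refine Finset.card_le_card fun p hp => ?_
      simp [ha p hp, hs p hp]
    have hle : Nat.nth Nat.Prime s.card ≤ a := by
      calc Nat.nth Nat.Prime s.card ≤ Nat.nth Nat.Prime (Nat.count Nat.Prime a) :=
            Nat.nth_monotone Nat.infinite_setOfPred_prime hcard
        _ = a := Nat.nth_count hap
    exact mul_le_mul (ih hs) (hf _ _ (Nat.prime_nth_prime _) hap hle)
      (hf0 _ (Nat.prime_nth_prime _)) (Finset.prod_nonneg fun p hp => hf0 p (hs p hp))

lemma prod_image_nth {M : Type*} [CommMonoid M] (l : ℕ) (f : ℕ → M) :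
    ∏ p ∈ (Finset.range l).image (Nat.nth Nat.Prime), f p =
      ∏ i ∈ Finset.range l, f (Nat.nth Nat.Prime i) :=
  Finset.prod_image fun _ _ _ _ h => Nat.nth_injective Nat.infinite_setOfPred_prime h

lemma primeFactors_Nk (l : ℕ) :
    (Nk l).primeFactors = (Finset.range l).image (Nat.nth Nat.Prime) := by
  have h : Nk l = ∏ p ∈ (Finset.range l).image (Nat.nth Nat.Prime), p :=
    (prod_image_nth l fun p => p).symm
  rw [h]
  refine Nat.primeFactors_prod fun p hp => ?_
  obtain ⟨i, -, rfl⟩ := Finset.mem_image.1 hp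
  exact Nat.prime_nth_prime i

lemma Nk_pos (l : ℕ) : 0 < Nk l :=
  Finset.prod_pos fun i _ => (Nat.prime_nth_prime i).pos

lemma totient_Nk (l : ℕ) :
    Nat.totient (Nk l) = ∏ i ∈ Finset.range l, (Nat.nth Nat.Prime i - 1) := by
  rw [Nat.totient_eq_div_primeFactors_mul, primeFactors_Nk, prod_image_nth, prod_image_nth]
  change Nk l / Nk l * _ = _
  rw [Nat.div_self (Nk_pos l), one_mul]

lemma totient_Nk_rat (l : ℕ) :
    (Nat.totient (Nk l) : ℚ) =
      Nk l * ∏ i ∈ Finset.range l, (1 - (Nat.nth Nat.Prime i : ℚ)⁻¹) := by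
  rw [Nat.totient_eq_mul_prod_factors, primeFactors_Nk, prod_image_nth]

lemma prod_primeFactors_sub_one_le_totient {n : ℕ} (hn : 0 < n) :
    ∏ p ∈ n.primeFactors, (p - 1) ≤ Nat.totient n := by
  rw [Nat.totient_eq_div_primeFactors_mul]
  exact Nat.le_mul_of_pos_left _ (Nat.div_pos (Nat.le_of_dvd hn (Nat.prod_primeFactors_dvd n))
    (Finset.prod_pos fun p hp => (Nat.prime_of_mem_primeFactors hp).pos))

lemma inv_prime_lt_one {p : ℕ} (hp : p.Prime) : (p : ℚ)⁻¹ < 1 :=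
  inv_lt_one_of_one_lt₀ (by exact_mod_cast hp.one_lt)

lemma totient_Nk_lt_of_card_le {l n : ℕ} (hn : Nk l < n) (hk : n.primeFactors.card ≤ l) :
    Nat.totient (Nk l) < Nat.totient n := by
  have h1 : ∏ i ∈ Finset.range n.primeFactors.card, (1 - (Nat.nth Nat.Prime i : ℚ)⁻¹) ≤
      ∏ p ∈ n.primeFactors, (1 - (p : ℚ)⁻¹) := by
    refine prod_nth_le_prod (fun p => 1 - (p : ℚ)⁻¹)
      (fun p hp => sub_nonneg.2 (inv_prime_lt_one hp).le) (fun p q hp _ hpq => ?_) _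
      (fun p hp => Nat.prime_of_mem_primeFactors hp)
    have : (0 : ℚ) < p := by exact_mod_cast hp.pos
    have : (p : ℚ) ≤ q := by exact_mod_cast hpq
    gcongr
  have hpos : ∀ i, 0 < 1 - (Nat.nth Nat.Prime i : ℚ)⁻¹ := fun i =>
    sub_pos.2 (inv_prime_lt_one (Nat.prime_nth_prime i))
  have h2 : ∏ i ∈ Finset.range l, (1 - (Nat.nth Nat.Prime i : ℚ)⁻¹) ≤
      ∏ i ∈ Finset.range n.primeFactors.card, (1 - (Nat.nth Nat.Prime i : ℚ)⁻¹) :=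
    Finset.prod_le_prod_of_subset_of_le_one (Finset.range_mono hk) (fun i _ => (hpos i).le)
      (fun i _ _ => sub_le_self _ (by positivity))
  have h3 : (Nat.totient (Nk l) : ℚ) < Nat.totient n := by
    rw [totient_Nk_rat, Nat.totient_eq_mul_prod_factors n]
    calc (Nk l : ℚ) * ∏ i ∈ Finset.range l, (1 - (Nat.nth Nat.Prime i : ℚ)⁻¹)
        < n * ∏ i ∈ Finset.range l, (1 - (Nat.nth Nat.Prime i : ℚ)⁻¹) :=
          mul_lt_mul_of_pos_right (by exact_mod_cast hn) (Finset.prod_pos fun i _ => hpos i)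
      _ ≤ n * ∏ p ∈ n.primeFactors, (1 - (p : ℚ)⁻¹) :=
          mul_le_mul_of_nonneg_left (h2.trans h1) (by positivity)
  exact_mod_cast h3

lemma totient_Nk_lt_of_lt_card {l n : ℕ} (hl : 1 ≤ l) (hn : 0 < n)
    (hk : l < n.primeFactors.card) : Nat.totient (Nk l) < Nat.totient n := by
  have h1 : ∏ i ∈ Finset.range n.primeFactors.card, (Nat.nth Nat.Prime i - 1) ≤
      ∏ p ∈ n.primeFactors, (p - 1) := by
    have := prod_nth_le_prod (fun p => ((p - 1 : ℕ) : ℚ)) (fun p _ => by positivity)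
      (fun p q _ _ hpq => by exact_mod_cast Nat.sub_le_sub_right hpq 1) n.primeFactors
      (fun p hp => Nat.prime_of_mem_primeFactors hp)
    exact_mod_cast this
  have hpos : ∀ i, 0 < Nat.nth Nat.Prime i - 1 := fun i =>
    Nat.sub_pos_of_lt (Nat.prime_nth_prime i).one_lt
  have h2 : ∏ i ∈ Finset.range (l + 1), (Nat.nth Nat.Prime i - 1) ≤
      ∏ i ∈ Finset.range n.primeFactors.card, (Nat.nth Nat.Prime i - 1) :=
    Finset.prod_le_prod_of_subset_of_one_le' (Finset.range_mono hk) fun i _ _ => hpos i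
  -- Since `l ≥ 1`, the prime of (zero-based) index `l` is larger than the first prime `2`.
  have h3 : 1 < Nat.nth Nat.Prime l - 1 := by
    have h0 := (Nat.prime_nth_prime 0).two_le
    have : Nat.nth Nat.Prime 0 < Nat.nth Nat.Prime l :=
      Nat.nth_strictMono Nat.infinite_setOfPred_prime hl
    omega
  calc Nat.totient (Nk l) = ∏ i ∈ Finset.range l, (Nat.nth Nat.Prime i - 1) := totient_Nk l
    _ < ∏ i ∈ Finset.range (l + 1), (Nat.nth Nat.Prime i - 1) := by
        rw [Finset.prod_range_succ]
        exact lt_mul_of_one_lt_right (Finset.prod_pos fun i _ => hpos i) h3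
    _ ≤ Nat.totient n := (h2.trans h1).trans (prod_primeFactors_sub_one_le_totient hn)

lemma filter_prime_Iic_nth {l : ℕ} (hl : 1 ≤ l) :
    (Finset.Iic (Nat.nth Nat.Prime (l - 1))).filter Nat.Prime =
      (Finset.range l).image (Nat.nth Nat.Prime) := by
  ext p
  simp only [Finset.mem_filter, Finset.mem_Iic, Finset.mem_image, Finset.mem_range]
  constructor
  · rintro ⟨hle, hp⟩
    refine ⟨Nat.count Nat.Prime p, ?_, Nat.nth_count hp⟩
    rw [← Nat.nth_count hp, Nat.nth_le_nth Nat.infinite_setOfPred_prime] at hle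
    omega
  · rintro ⟨i, hi, rfl⟩
    exact ⟨Nat.nth_monotone Nat.infinite_setOfPred_prime (by omega), Nat.prime_nth_prime i⟩

/-- Let `ℓ ≥ 1` and `n > N_ℓ`. Then `φ(n) > φ(N_ℓ) = ∏_{p prime, p ≤ p_ℓ} (p−1)`. -/
theorem stmt_7 (l n : ℕ) (hl : 1 ≤ l) (hn : Nk l < n) :
    Nat.totient (Nk l) < Nat.totient n ∧
    Nat.totient (Nk l) =
      ∏ p ∈ (Finset.Iic (Nat.nth Nat.Prime (l - 1))).filter Nat.Prime, (p - 1) := by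
  constructor
  · rcases le_or_gt n.primeFactors.card l with hk | hk
    · exact totient_Nk_lt_of_card_le hn hk
    · exact totient_Nk_lt_of_lt_card hl (by omega) hk
  · rw [filter_prime_Iic_nth hl, prod_image_nth, totient_Nk]
end

section
/- For every prime p and all integers α, β with 1 ≤ α < β, one has ψ(p,β) < ψ(p,α); that is, ψ(p,α) is strictly decreasing in α. -/
/-!
Write `ψ(p,α) = N(α) / D(α)` for the two logarithms. Passing from `α` to `α + 1` at least halves
the numerator, `2 N(α+1) ≤ N(α)` (`two_mul_num_le`), whereas the denominator loses less than
half of its value, `D(α) < 2 D(α+1)` (`den_lt_two_mul`). All quantities being positive, the quotient strictly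
decreases at each step. Both inequalities are exponentiated into rational inequalities: the square
of the new argument is compared with the old argument.
-/

open Real

/-- `ψ(p,α) = log((p^{α+1}−1)/(p^{α+1}−p)) / log(1 + 1/α)`. -/
noncomputable def psi (p α : ℕ) : ℝ :=
  Real.log (((p : ℝ) ^ (α + 1) - 1) / ((p : ℝ) ^ (α + 1) - (p : ℝ))) /
    Real.log (1 + 1 / (α : ℝ))

/-- Here `P` stands for `p ^ (α + 1)`, so that `q * P` is `p ^ (α + 2)`. -/
lemma two_mul_num_le {q P : ℝ} (hq : 2 ≤ q) (hP : q < P) :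
    2 * Real.log ((q * P - 1) / (q * P - q)) ≤ Real.log ((P - 1) / (P - q)) := by
  have hqP : 0 < q * P - q := by nlinarith
  have hqP' : 0 < q * P - 1 := by linarith
  have h2 : 2 * Real.log ((q * P - 1) / (q * P - q))
      = Real.log (((q * P - 1) / (q * P - q)) ^ 2) := by
    rw [Real.log_pow]; norm_num
  rw [h2]
  apply Real.log_le_log (by positivity)
  rw [div_pow, div_le_div_iff₀ (by positivity) (by linarith)]
  -- Substituting `q = r + 2`, `P = q + t` turns the difference into `q - 1` times a polynomial
  -- in `r ≥ 0`, `t > 0` whose only negative term, `-(r + 1) * t`, is absorbed using `1 ≤ (r + 2) ^ 2`.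
  obtain ⟨r, rfl⟩ : ∃ r, q = r + 2 := ⟨q - 2, by ring⟩
  obtain ⟨t, rfl⟩ : ∃ t, P = r + 2 + t := ⟨P - (r + 2), by ring⟩
  have hr : 0 ≤ r := by linarith
  have ht : 0 < t := by linarith
  rw [← sub_nonneg]
  have key : 0 ≤ (r + 1) * ((t + (r + 1)) * ((r + 2) * r * t + (r + 2) ^ 2 * (r + 1))
      - (r + 1) * t) := by
    apply mul_nonneg (by linarith)
    have : 0 ≤ (t + (r + 1)) * ((r + 2) * r * t)
        + (r + 1) * (((r + 2) ^ 2 - 1) * t + (r + 2) ^ 2 * (r + 1)) := by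
      have : 0 ≤ (r + 2) ^ 2 - 1 := by nlinarith
      positivity
    linarith
  linarith

lemma den_lt_two_mul {a : ℝ} (ha : 1 ≤ a) :
    Real.log (1 + 1 / a) < 2 * Real.log (1 + 1 / (a + 1)) := by
  have h2 : 2 * Real.log (1 + 1 / (a + 1)) = Real.log ((1 + 1 / (a + 1)) ^ 2) := by
    rw [Real.log_pow]; norm_num
  rw [h2]
  apply Real.log_lt_log (by positivity)
  have h : (1 + 1 / (a + 1)) ^ 2 - (1 + 1 / a) = (a ^ 2 + a - 1) / (a * (a + 1) ^ 2) := by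
    field_simp
    ring
  have : 0 < (a ^ 2 + a - 1) / (a * (a + 1) ^ 2) :=
    div_pos (by nlinarith) (by positivity)
  linarith

lemma psi_succ_lt {p α : ℕ} (hp : 2 ≤ p) (hα : 1 ≤ α) : psi p (α + 1) < psi p α := by
  have hq : (2 : ℝ) ≤ p := by exact_mod_cast hp
  have ha : (1 : ℝ) ≤ α := by exact_mod_cast hα
  have hP : (p : ℝ) < (p : ℝ) ^ (α + 1) := lt_self_pow₀ (by linarith) (by omega)
  unfold psi
  rw [pow_succ' (p : ℝ) (α + 1), Nat.cast_add_one]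
  generalize (p : ℝ) ^ (α + 1) = P at hP ⊢
  have hN := two_mul_num_le hq hP
  have hD := den_lt_two_mul ha
  have hN' : 0 < Real.log (((p : ℝ) * P - 1) / (p * P - p)) := by
    apply Real.log_pos
    rw [one_lt_div (by nlinarith)]
    linarith
  have hpos : ∀ x : ℝ, 0 < x → 0 < Real.log (1 + 1 / x) := fun x hx =>
    Real.log_pos (by linarith [one_div_pos.mpr hx])
  have hD₀ := hpos α (by linarith)
  have hD₁ := hpos (α + 1) (by linarith)
  rw [div_lt_div_iff₀ hD₁ hD₀]
  nlinarith [mul_lt_mul_of_pos_left hD hN', mul_le_mul_of_nonneg_right hN hD₁.le]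

/-- For `p` prime and `1 ≤ α < β`, `ψ(p,β) < ψ(p,α)`: the function `ψ(p,·)` is strictly
decreasing. -/
theorem stmt_12 (p : ℕ) (hp : p.Prime) (α β : ℕ) (hα : 1 ≤ α) (hαβ : α < β) :
    psi p β < psi p α := by
  induction β, hαβ using Nat.le_induction with
  | base => exact psi_succ_lt hp.two_le hα
  | succ n hn ih => exact (psi_succ_lt hp.two_le (by omega)).trans ih
end

section
/- For every integer α ≥ 1 and all primes p < q, one has ψ(q,α) < ψ(p,α); that is, ψ(p,α) is strictly decreasing in p. -/
/-!
For `x > 1`, factoring `x - 1` out of the numerator and the denominator gives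
`(x^{α+1} - 1) / (x^{α+1} - x) = 1 + 1 / (x + x² + ⋯ + x^α)`.
The right-hand side exceeds `1` and is strictly decreasing in `x`, so its logarithm is strictly
decreasing too; dividing by the positive constant `log (1 + 1/α)` preserves this.
-/

open Real

/-- The denominator is `x - 1` times a geometric sum, and the numerator exceeds it by `x - 1`. -/
lemma ratio_eq_one_add_inv (α : ℕ) (hα : 1 ≤ α) (x : ℝ) (hx : 1 < x) :
    (x ^ (α + 1) - 1) / (x ^ (α + 1) - x) = 1 + 1 / ∑ i ∈ Finset.range α, x ^ (i + 1) := by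
  have hS : 0 < ∑ i ∈ Finset.range α, x ^ (i + 1) :=
    Finset.sum_pos (fun i _ => by positivity) ⟨0, Finset.mem_range.2 hα⟩
  have hden : x ^ (α + 1) - x = (x - 1) * ∑ i ∈ Finset.range α, x ^ (i + 1) := by
    have h := geom_sum_mul x α
    simp only [pow_succ, ← Finset.sum_mul]
    linear_combination -x * h
  have hx1 : x - 1 ≠ 0 := (sub_pos.2 hx).ne'
  have hnum : x ^ (α + 1) - 1 = (x - 1) * (∑ i ∈ Finset.range α, x ^ (i + 1) + 1) := by
    linear_combination hden
  rw [hden, hnum, mul_div_mul_left _ _ hx1, add_div, div_self hS.ne']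

/-- For `α ≥ 1` and primes `p < q`, `ψ(q,α) < ψ(p,α)`: the function `ψ(·,α)` is strictly
decreasing. -/
theorem stmt_13 (α : ℕ) (hα : 1 ≤ α) (p q : ℕ) (hp : p.Prime) (hq : q.Prime)
    (hpq : p < q) : psi q α < psi p α := by
  have hp1 : (1 : ℝ) < p := by exact_mod_cast hp.one_lt
  have hq1 : (1 : ℝ) < q := by exact_mod_cast hq.one_lt
  have hpq' : (p : ℝ) < q := by exact_mod_cast hpq
  have hα0 : (0 : ℝ) < α := by exact_mod_cast hα
  have hne : (Finset.range α).Nonempty := ⟨0, Finset.mem_range.2 hα⟩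
  have hSp : 0 < ∑ i ∈ Finset.range α, (p : ℝ) ^ (i + 1) :=
    Finset.sum_pos (fun i _ => by positivity) hne
  have hSpq : ∑ i ∈ Finset.range α, (p : ℝ) ^ (i + 1) <
      ∑ i ∈ Finset.range α, (q : ℝ) ^ (i + 1) :=
    Finset.sum_lt_sum_of_nonempty hne fun i _ =>
      pow_lt_pow_left₀ hpq' (by positivity) (Nat.succ_ne_zero i)
  have hSq := hSp.trans hSpq
  have hlog : 0 < Real.log (1 + 1 / (α : ℝ)) :=
    Real.log_pos (lt_add_of_pos_right 1 (by positivity))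
  unfold psi
  rw [ratio_eq_one_add_inv α hα p hp1, ratio_eq_one_add_inv α hα q hq1]
  refine div_lt_div_of_pos_right (Real.log_lt_log (by positivity) ?_) hlog
  have := one_div_lt_one_div_of_lt hSp hSpq
  linarith
end

section
/- Let u₀ ≤ u₁ be real numbers and let F : ℝ → ℝ be positive on [u₀, u₁] with u ↦ log F(u) concave on [u₀, u₁]. Let ε > 0 and let N' and N'' be two (σ,τ)-superchampions with the same parameter ε. Then for every integer n with e^{u₀} ≤ τ(N') ≤ τ(n) ≤ τ(N'') ≤ e^{u₁}, one has σ(n)/(n·F(log τ(n))) ≤ max( σ(N')/(N'·F(log τ(N'))), σ(N'')/(N''·F(log τ(N''))) ). -/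
/-!
Put `ρ(m) = σ(m)/(m τ(m)^ε)` and `G(u) = ε u - log F(u)`, which is convex on `[u₀, u₁]`. Then
`σ(m)/(m F(log τ(m))) = ρ(m) exp (G(log τ(m)))` (`sigma_div_eq_mul_exp`). Since `log τ(n)` lies
between `log τ(N')` and `log τ(N'')`, convexity bounds `G(log τ(n))` by the larger of the values
of `G` at these two points, while `ρ(n) ≤ ρ(N')` and `ρ(n) ≤ ρ(N'')` because `N'` and `N''` are
superchampions.
-/

open Real

/-- `N` is a `(σ,τ)`-superchampion with parameter `ε > 0` if the function
`n ↦ σ(n)/(n·τ(n)^ε)` attains its maximum at `N`. -/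
def IsSuperChampion (ε : ℝ) (N : ℕ) : Prop :=
  1 ≤ N ∧ ∀ n : ℕ, 1 ≤ n →
    (sigmaFn n : ℝ) / ((n : ℝ) * (tauFn n : ℝ) ^ ε) ≤
      (sigmaFn N : ℝ) / ((N : ℝ) * (tauFn N : ℝ) ^ ε)

/-- Factoring out the exponential of `ε log τ(m) - log F(log τ(m))` separates the function that
superchampions maximize from a quantity depending on `τ(m)` alone. -/
lemma sigma_div_eq_mul_exp (F : ℝ → ℝ) (ε : ℝ) (m : ℕ) (ht : 0 < (tauFn m : ℝ))
    (hF : 0 < F (Real.log (tauFn m))) :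
    (sigmaFn m : ℝ) / ((m : ℝ) * F (Real.log (tauFn m))) =
      (sigmaFn m : ℝ) / ((m : ℝ) * (tauFn m : ℝ) ^ ε) *
        Real.exp (ε * Real.log (tauFn m) - Real.log (F (Real.log (tauFn m)))) := by
  have hp : 0 < (tauFn m : ℝ) ^ ε := Real.rpow_pos_of_pos ht ε
  rw [Real.exp_sub, Real.exp_log hF, mul_comm ε, ← Real.rpow_def_of_pos ht]
  field_simp

/-- Let `F` be positive and logarithmically concave on `[u₀,u₁]`, and let `N'`, `N''` be
two `(σ,τ)`-superchampions with the same parameter `ε`. If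
`e^{u₀} ≤ τ(N') ≤ τ(n) ≤ τ(N'') ≤ e^{u₁}` then
`σ(n)/(n·F(log τ(n))) ≤ max(σ(N')/(N'·F(log τ(N'))), σ(N'')/(N''·F(log τ(N''))))`. -/
theorem stmt_16 (u₀ u₁ : ℝ) (hu : u₀ ≤ u₁) (F : ℝ → ℝ)
    (hFpos : ∀ u ∈ Set.Icc u₀ u₁, 0 < F u)
    (hFconc : ConcaveOn ℝ (Set.Icc u₀ u₁) (fun u => Real.log (F u)))
    (ε : ℝ) (hε : 0 < ε) (N' N'' : ℕ)
    (hN' : IsSuperChampion ε N') (hN'' : IsSuperChampion ε N'')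
    (n : ℕ) (h0 : Real.exp u₀ ≤ (tauFn N' : ℝ)) (h1 : tauFn N' ≤ tauFn n)
    (h2 : tauFn n ≤ tauFn N'') (h3 : (tauFn N'' : ℝ) ≤ Real.exp u₁) :
    (sigmaFn n : ℝ) / ((n : ℝ) * F (Real.log (tauFn n))) ≤
      max ((sigmaFn N' : ℝ) / ((N' : ℝ) * F (Real.log (tauFn N'))))
        ((sigmaFn N'' : ℝ) / ((N'' : ℝ) * F (Real.log (tauFn N'')))) := by
  have ht' : 0 < (tauFn N' : ℝ) := (Real.exp_pos _).trans_le h0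
  have h1r : (tauFn N' : ℝ) ≤ tauFn n := by exact_mod_cast h1
  have h2r : (tauFn n : ℝ) ≤ tauFn N'' := by exact_mod_cast h2
  have ht : 0 < (tauFn n : ℝ) := ht'.trans_le h1r
  have ht'' : 0 < (tauFn N'' : ℝ) := ht.trans_le h2r
  have hn : 1 ≤ n := by
    rcases Nat.eq_zero_or_pos n with rfl | h
    · -- `Nat.divisors 0 = ∅`, so `tauFn 0 = 0`, against `0 < tauFn n`.
      simp [tauFn] at ht
    · exact h
  have l0 : u₀ ≤ Real.log (tauFn N') := (Real.le_log_iff_exp_le ht').2 h0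
  have l1 : Real.log (tauFn N') ≤ Real.log (tauFn n) := Real.log_le_log ht' h1r
  have l2 : Real.log (tauFn n) ≤ Real.log (tauFn N'') := Real.log_le_log ht h2r
  have l3 : Real.log (tauFn N'') ≤ u₁ := (Real.log_le_iff_le_exp ht'').2 h3
  have m' : Real.log (tauFn N') ∈ Set.Icc u₀ u₁ := ⟨l0, by linarith⟩
  have m : Real.log (tauFn n) ∈ Set.Icc u₀ u₁ := ⟨by linarith, by linarith⟩
  have m'' : Real.log (tauFn N'') ∈ Set.Icc u₀ u₁ := ⟨by linarith, l3⟩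
  have hG : ConvexOn ℝ (Set.Icc u₀ u₁) (fun u => ε * u - Real.log (F u)) :=
    ((convexOn_id (convex_Icc u₀ u₁)).smul hε.le).sub hFconc
  have hmax := hG.le_max_of_mem_Icc m' m'' ⟨l1, l2⟩
  rw [sigma_div_eq_mul_exp F ε n ht (hFpos _ m), sigma_div_eq_mul_exp F ε N' ht' (hFpos _ m'),
    sigma_div_eq_mul_exp F ε N'' ht'' (hFpos _ m'')]
  rcases le_max_iff.1 hmax with h | h
  · exact le_max_of_le_left
      (mul_le_mul (hN'.2 n hn) (Real.exp_le_exp.2 h) (Real.exp_pos _).le (by positivity))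
  · exact le_max_of_le_right
      (mul_le_mul (hN''.2 n hn) (Real.exp_le_exp.2 h) (Real.exp_pos _).le (by positivity))
end
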